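/- Let (R,m) be a Cohen-Macaulay local ring of dimension d, let M be a horizontally linked R-module of finite G-dimension, and let k be a non-negative integer. Then M satisfies Serre's condition (S_k) if and only if H^i_m(λM) = 0 for all i with d − k + 1 ≤ i ≤ d − 1. -/

import Mathlib

open CategoryTheory

noncomputable section

universe u

/-- The `i`-th Ext group `Ext^i_R(M,N)`, as a type (with its `R`-module structure). -/
abbrev extM (R : Type u) [CommRing R] (i : ℕ) (M N : Type u) [AddCommGroup M] [Module R M]
    [AddCommGroup N] [Module R N] : Type u :=
  ((Ext R (ModuleCat.{u} R) i).obj (Opposite.op (ModuleCat.of R M))).obj (ModuleCat.of R N)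

/-- The `i`-th Tor group `Tor^R_i(M,N)`, as a type. -/
abbrev torM (R : Type u) [CommRing R] (i : ℕ) (M N : Type u) [AddCommGroup M] [Module R M]
    [AddCommGroup N] [Module R N] : Type u :=
  ((Tor (ModuleCat.{u} R) i).obj (ModuleCat.of R M)).obj (ModuleCat.of R N)

/-- The `i`-th local cohomology `H^i_I(M)`, as a type. -/
abbrev locCoh (R : Type u) [CommRing R] (I : Ideal R) (i : ℕ) (M : Type u) [AddCommGroup M]
    [Module R M] : Type u :=
  (localCohomology I i).obj (ModuleCat.of R M)

/-- A submodule `N ≤ M` is superfluous if `K ⊔ N = ⊤` implies `K = ⊤`. -/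
def Submodule.IsSuperfluous {R M : Type u} [CommRing R] [AddCommGroup M] [Module R M]
    (N : Submodule R M) : Prop :=
  ∀ K : Submodule R M, K ⊔ N = ⊤ → K = ⊤

/-- A minimal projective resolution of `M` by finitely generated projective modules:
each `P i → Ω^i M` is a projective cover (i.e. has superfluous kernel). -/
structure MinRes (R : Type u) [CommRing R] (M : Type u) [AddCommGroup M] [Module R M] where
  P : ℕ → ModuleCat.{u} R
  projective : ∀ i, Module.Projective R (P i)
  finite : ∀ i, Module.Finite R (P i)
  d : (i : ℕ) → (↥(P (i + 1)) →ₗ[R] ↥(P i))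
  ε : ↥(P 0) →ₗ[R] M
  surj : Function.Surjective ε
  exact0 : LinearMap.range (d 0) = LinearMap.ker ε
  exact : ∀ i, LinearMap.range (d (i + 1)) = LinearMap.ker (d i)
  min_eps : (LinearMap.ker ε).IsSuperfluous
  min_d : ∀ i, (LinearMap.ker (d i)).IsSuperfluous

namespace MinRes

variable {R M : Type u} [CommRing R] [AddCommGroup M] [Module R M]

/-- `T k F` is the Auslander-Bridger transpose `𝒯_{k+1} M = Tr Ω^k M`, computed as the
cokernel of `P_k* → P_{k+1}*`. -/
def T (F : MinRes R M) (k : ℕ) : Type u :=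
  (Module.Dual R ↥(F.P (k + 1))) ⧸ LinearMap.range (F.d k).dualMap

instance (F : MinRes R M) (k : ℕ) : AddCommGroup (F.T k) :=
  inferInstanceAs (AddCommGroup ((Module.Dual R ↥(F.P (k + 1))) ⧸
    LinearMap.range (F.d k).dualMap))

instance (F : MinRes R M) (k : ℕ) : Module R (F.T k) :=
  inferInstanceAs (Module R ((Module.Dual R ↥(F.P (k + 1))) ⧸
    LinearMap.range (F.d k).dualMap))

/-- The transpose `Tr M = coker(P₀* → P₁*)` computed from a minimal projective presentation. -/
abbrev Tr (F : MinRes R M) : Type u := F.T 0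

/-- `λM = ΩTr M`, realized as the image of `P₀* → P₁*` for a minimal projective
presentation `P₁ → P₀ → M → 0`. -/
def lambdaMod (F : MinRes R M) : Type u :=
  ↥(LinearMap.range (F.d 0).dualMap)

instance (F : MinRes R M) : AddCommGroup F.lambdaMod :=
  inferInstanceAs (AddCommGroup ↥(LinearMap.range (F.d 0).dualMap))

instance (F : MinRes R M) : Module R F.lambdaMod :=
  inferInstanceAs (Module R ↥(LinearMap.range (F.d 0).dualMap))

end MinRes

/-- `M` is a horizontally linked `R`-module, i.e. `M ≅ λλM`. -/
def IsHorizontallyLinked (R : Type u) [CommRing R] (M : Type u) [AddCommGroup M]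
    [Module R M] : Prop :=
  ∃ (F : MinRes R M) (G : MinRes R F.lambdaMod), Nonempty (G.lambdaMod ≃ₗ[R] M)

/-- `M` and `N` are horizontally linked to each other: `M ≅ λN` and `N ≅ λM`. -/
def MutuallyLinked (A : Type u) [CommRing A] (M N : Type u) [AddCommGroup M] [Module A M]
    [AddCommGroup N] [Module A N] : Prop :=
  ∃ (F : MinRes A M) (G : MinRes A N),
    Nonempty (F.lambdaMod ≃ₗ[A] N) ∧ Nonempty (G.lambdaMod ≃ₗ[A] M)

/-- `M` is linked to `N` by the ideal `c`: `c` annihilates both modules and they are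
horizontally linked to each other as `R ⧸ c`-modules. -/
def LinkedBy (R : Type u) [CommRing R] (c : Ideal R) (M N : Type u) [AddCommGroup M]
    [Module R M] [AddCommGroup N] [Module R N] : Prop :=
  ∃ (hM : Module.IsTorsionBySet R M c) (hN : Module.IsTorsionBySet R N c),
    letI := hM.module
    letI := hN.module
    MutuallyLinked (R ⧸ c) M N

/-- A stable module: no nonzero projective direct summand. -/
def IsStableModule (R : Type u) [CommRing R] (M : Type u) [AddCommGroup M] [Module R M] : Prop :=
  ∀ N : Submodule R M, Module.Projective R ↥N → (∃ N' : Submodule R M, IsCompl N N') → N = ⊥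

/-- `M` has G-dimension zero: `M` is finitely generated and reflexive,
and `Ext^i(M,R) = 0 = Ext^i(M*,R)` for all `i > 0`. -/
def IsGDimZero (R : Type u) [CommRing R] (M : Type u) [AddCommGroup M] [Module R M] : Prop :=
  Module.Finite R M ∧ Function.Bijective (Module.Dual.eval R M) ∧
    (∀ i : ℕ, 0 < i → Subsingleton (extM R i M R)) ∧
    (∀ i : ℕ, 0 < i → Subsingleton (extM R i (Module.Dual R M) R))

/-- `M` admits a resolution of length `≤ n` by modules of G-dimension zero. -/
def GDimLE (R : Type u) [CommRing R] : ℕ → ModuleCat.{u} R → Prop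
  | 0, M => IsGDimZero R ↥M
  | n + 1, M =>
    ∃ (G : ModuleCat.{u} R) (f : ↥G →ₗ[R] ↥M), IsGDimZero R ↥G ∧ Function.Surjective f ∧
      GDimLE R n (ModuleCat.of R ↥(LinearMap.ker f))

/-- The G-dimension of `M`: the minimal length of a resolution of `M` by modules of
G-dimension zero (`∞` if there is none). -/
def GDim (R : Type u) [CommRing R] (M : Type u) [AddCommGroup M] [Module R M] : ℕ∞ :=
  sInf {n : ℕ∞ | ∃ k : ℕ, n = k ∧ GDimLE R k (ModuleCat.of R M)}

/-- The reduced grade of `M`: `rgr M = inf{ i > 0 | Ext^i(M,R) ≠ 0 }`. -/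
def rgr (R : Type u) [CommRing R] (M : Type u) [AddCommGroup M] [Module R M] : ℕ∞ :=
  sInf {n : ℕ∞ | ∃ k : ℕ, n = k ∧ 0 < k ∧ ¬ Subsingleton (extM R k M R)}

/-- The grade of `M`: `gr M = inf{ i ≥ 0 | Ext^i(M,R) ≠ 0 }`. -/
def egrade (R : Type u) [CommRing R] (M : Type u) [AddCommGroup M] [Module R M] : ℕ∞ :=
  sInf {n : ℕ∞ | ∃ k : ℕ, n = k ∧ ¬ Subsingleton (extM R k M R)}

/-- `depth_I(M) = inf{ i | Ext^i(R/I, M) ≠ 0 }`; for `I` the maximal ideal of a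
local ring this is the depth of `M`. -/
def edepth (R : Type u) [CommRing R] (I : Ideal R) (M : Type u) [AddCommGroup M]
    [Module R M] : ℕ∞ :=
  sInf {n : ℕ∞ | ∃ k : ℕ, n = k ∧ ¬ Subsingleton (extM R k (R ⧸ I) M)}

/-- The depth of the local ring `R`. -/
def rdepth (R : Type u) [CommRing R] [IsLocalRing R] : ℕ∞ :=
  edepth R (IsLocalRing.maximalIdeal R) R

/-- `depth_{R_p}(M_p)`. -/
def locDepth (R : Type u) [CommRing R] (p : Ideal R) [p.IsPrime] (M : Type u) [AddCommGroup M]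
    [Module R M] : ℕ∞ :=
  edepth (Localization.AtPrime p) (IsLocalRing.maximalIdeal (Localization.AtPrime p))
    (LocalizedModule p.primeCompl M)

/-- `depth R_p`. -/
def locRingDepth (R : Type u) [CommRing R] (p : Ideal R) [p.IsPrime] : ℕ∞ :=
  rdepth (Localization.AtPrime p)

/-- `Gdim_{R_p}(M_p)`. -/
def locGDim (R : Type u) [CommRing R] (p : Ideal R) [p.IsPrime] (M : Type u) [AddCommGroup M]
    [Module R M] : ℕ∞ :=
  GDim (Localization.AtPrime p) (LocalizedModule p.primeCompl M)

/-- `rgr_{R_p}(M_p)`. -/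
def locRgr (R : Type u) [CommRing R] (p : Ideal R) [p.IsPrime] (M : Type u) [AddCommGroup M]
    [Module R M] : ℕ∞ :=
  rgr (Localization.AtPrime p) (LocalizedModule p.primeCompl M)

/-- `dim_{R_p}(M_p)`, the Krull dimension of the support of `M_p` over `R_p`. -/
def locDim (R : Type u) [CommRing R] (p : Ideal R) [p.IsPrime] (M : Type u) [AddCommGroup M]
    [Module R M] : WithBot ℕ∞ :=
  ringKrullDim ((Localization.AtPrime p) ⧸
    Module.annihilator (Localization.AtPrime p) (LocalizedModule p.primeCompl M))

/-- `M` satisfies the condition `S̃_k`: `depth_{R_p}(M_p) ≥ min{k, depth R_p}` for all primes. -/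
def Stilde (R : Type u) [CommRing R] (k : ℕ) (M : Type u) [AddCommGroup M] [Module R M] : Prop :=
  ∀ (p : Ideal R) (_ : p.IsPrime), min (k : ℕ∞) (locRingDepth R p) ≤ locDepth R p M

/-- `M` satisfies Serre's condition `(S_k)`:
`depth_{R_p}(M_p) ≥ min{k, dim_{R_p}(M_p)}` for all primes. -/
def SerreS (R : Type u) [CommRing R] (k : ℕ) (M : Type u) [AddCommGroup M] [Module R M] : Prop :=
  ∀ (p : Ideal R) (_ : p.IsPrime),
    min (k : WithBot ℕ∞) (locDim R p M) ≤ (locDepth R p M : WithBot ℕ∞)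

/-- `M` is a `k`-th syzygy module. -/
def IsKthSyzygy (R : Type u) [CommRing R] : ℕ → ModuleCat.{u} R → Prop
  | 0, _ => True
  | k + 1, M =>
    ∃ (P : ModuleCat.{u} R) (f : ↥M →ₗ[R] ↥P), Module.Projective R ↥P ∧ Module.Finite R ↥P ∧
      Function.Injective f ∧ IsKthSyzygy R k (ModuleCat.of R (↥P ⧸ LinearMap.range f))

/-- The `I`-torsion submodule `Γ_I(M) = { x | I^n x = 0 for some n }`. -/
def gammaTorsion (R : Type u) [CommRing R] (I : Ideal R) (M : Type u) [AddCommGroup M]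
    [Module R M] : Submodule R M where
  carrier := {x | ∃ n : ℕ, ∀ a ∈ I ^ n, a • x = 0}
  zero_mem' := ⟨0, fun a _ => smul_zero a⟩
  add_mem' := by
    rintro x y ⟨n, hn⟩ ⟨m, hm⟩
    exact ⟨n + m, fun a ha => by
      rw [smul_add, hn a (Ideal.pow_le_pow_right (Nat.le_add_right n m) ha),
        hm a (Ideal.pow_le_pow_right (Nat.le_add_left m n) ha), add_zero]⟩
  smul_mem' := by
    rintro c x ⟨n, hn⟩
    exact ⟨n, fun a ha => by rw [smul_comm, hn a ha, smul_zero]⟩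

/-- `N` has finite flat dimension (characterized by uniform vanishing of `Tor`). -/
def HasFiniteFlatDim (R : Type u) [CommRing R] (N : Type u) [AddCommGroup N] [Module R N] : Prop :=
  ∃ n : ℕ, ∀ i : ℕ, n < i → ∀ (M : ModuleCat.{u} R), Subsingleton (torM R i ↥M N)

/-- `N` has finite injective dimension (characterized by uniform vanishing of `Ext`). -/
def HasFiniteInjDim (R : Type u) [CommRing R] (N : Type u) [AddCommGroup N] [Module R N] : Prop :=
  ∃ n : ℕ, ∀ i : ℕ, n < i → ∀ (M : ModuleCat.{u} R), Subsingleton (extM R i ↥M N)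

/-- `K` is a semidualizing `R`-module. -/
def IsSemidualizing (R : Type u) [CommRing R] (K : Type u) [AddCommGroup K] [Module R K] : Prop :=
  Module.Finite R K ∧ Function.Bijective (LinearMap.lsmul R K) ∧
    ∀ i : ℕ, 0 < i → Subsingleton (extM R i K K)

/-- The biduality map `M → Hom(Hom(M,K),K)`. -/
def evalK (R : Type u) [CommRing R] (K M : Type u) [AddCommGroup K] [Module R K]
    [AddCommGroup M] [Module R M] : M →ₗ[R] ((M →ₗ[R] K) →ₗ[R] K) :=
  LinearMap.applyₗ

/-- `M` has `G_K`-dimension zero. -/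
def IsGKDimZero (R : Type u) [CommRing R] (K M : Type u) [AddCommGroup K] [Module R K]
    [AddCommGroup M] [Module R M] : Prop :=
  Module.Finite R M ∧ Function.Bijective (evalK R K M) ∧
    (∀ i : ℕ, 0 < i → Subsingleton (extM R i M K)) ∧
    (∀ i : ℕ, 0 < i → Subsingleton (extM R i (M →ₗ[R] K) K))

/-- `M` admits a resolution of length `≤ n` by modules of `G_K`-dimension zero. -/
def GKDimLE (R : Type u) [CommRing R] (K : Type u) [AddCommGroup K] [Module R K] :
    ℕ → ModuleCat.{u} R → Prop
  | 0, M => IsGKDimZero R K ↥M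
  | n + 1, M =>
    ∃ (G : ModuleCat.{u} R) (f : ↥G →ₗ[R] ↥M), IsGKDimZero R K ↥G ∧ Function.Surjective f ∧
      GKDimLE R K n (ModuleCat.of R ↥(LinearMap.ker f))

/-- The `G_K`-dimension of `M`. -/
def GKDim (R : Type u) [CommRing R] (K M : Type u) [AddCommGroup K] [Module R K]
    [AddCommGroup M] [Module R M] : ℕ∞ :=
  sInf {n : ℕ∞ | ∃ k : ℕ, n = k ∧ GKDimLE R K k (ModuleCat.of R M)}

/-- The grade of a module, `gr_R(M) = grade(Ann_R(M), R) = inf{i | Ext^i(R/Ann M, R) ≠ 0}`. -/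
def grAnn (R : Type u) [CommRing R] (M : Type u) [AddCommGroup M] [Module R M] : ℕ∞ :=
  egrade R (R ⧸ Module.annihilator R M)

/-- The grade of an ideal, `grade(I) = inf{i | Ext^i(R/I, R) ≠ 0}`. -/
def gradeI (R : Type u) [CommRing R] (I : Ideal R) : ℕ∞ :=
  egrade R (R ⧸ I)

/-- The ideal `I` is `G_K`-Gorenstein: `R/I` is `G_K`-perfect and `Ext^{gr I}(R/I, K)` is
cyclic. -/
def IsGKGorensteinIdeal (R : Type u) [CommRing R] (K : Type u) [AddCommGroup K] [Module R K]
    (I : Ideal R) : Prop :=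
  ∃ n : ℕ, grAnn R (R ⧸ I) = (n : ℕ∞) ∧ GKDim R K (R ⧸ I) = (n : ℕ∞) ∧
    ∃ x : extM R n (R ⧸ I) K, Submodule.span R {x} = ⊤

end

/-!
Since `M` embeds in a free module and has finite G-dimension, localizing the Auslander–Bridger
formula turns `(S_k)` into the condition `codim Ext^{i+1}(M, R) ≥ i + 1 + k` for all `i ≥ 0`.

Dualize a projective resolution of `M`. Writing `N i`, `X i` and `e i` for the image and the
cokernel of the `i`-th map and the cohomology after it, `N 0 = λM` and `e i = Ext^{i+1}(M, R)`,
and there are short exact sequences `0 → N i → Q (i + 1) → X i → 0` and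
`0 → e i → X i → N (i + 1) → 0`, where `H^j_m (Q i) = 0` for `j < d` as `R` is Cohen–Macaulay.
If the codimension bounds hold, Grothendieck vanishing for the `e i` propagates to `N 0`.

For the converse, induct on `k`; the case `k = 1` holds because `M` is torsionless. If the bounds
hold for `k`, then `H^{d-k}_m (N 0) = 0` shifts along the sequences to `H^t_m (X i) = 0`, where
`t = d - r` and `r = i + 1 + k`. So `H^t_m (e i)` is a quotient of `H^{t-1}_m (N (i + 1))`, which
is killed by a product of annihilators of the `e l` with `l > i`, an ideal of height greater than
`r`. Such an ideal can only kill `H^{d-r}_m (e i)` if the latter vanishes, and that vanishing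
forces the codimension of `e i` to exceed `r`.
-/

namespace HorizontalLinkage

/-! ### The two Ext functors of Mathlib -/

section

open Limits Opposite

section ClassRepresents

variable {R : Type u} [CommRing R]
variable {K L : HomologicalComplex (ModuleCat.{u} R)ᵒᵖ (ComplexShape.down ℕ)} {n : ℕ}

/-- The element `z` of the `n`-th term of a complex in `(ModuleCat R)ᵒᵖ`, read as a cochain complex
of modules, is a cocycle with cohomology class `h`. -/
def ClassRepresents (K : HomologicalComplex (ModuleCat.{u} R)ᵒᵖ (ComplexShape.down ℕ)) (n : ℕ)
    (z : (K.X n).unop) (h : (K.homology n).unop) : Prop :=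
  ∃ c : (K.opcycles n).unop, (K.pOpcycles n).unop c = z ∧ (K.homologyι n).unop c = h

theorem unop_comp_apply {A B C : (ModuleCat.{u} R)ᵒᵖ} (f : A ⟶ B) (g : B ⟶ C) (x : C.unop) :
    f.unop (g.unop x) = (f ≫ g).unop x := rfl

theorem ClassRepresents.exists_cochain (h : (K.homology n).unop) :
    ∃ z, ClassRepresents K n z h :=
  have ⟨c, hc⟩ := (ModuleCat.epi_iff_surjective (K.homologyι n).unop).1 inferInstance h
  ⟨_, c, rfl, hc⟩

theorem ClassRepresents.isCocycle {z : (K.X n).unop} {h : (K.homology n).unop}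
    (hz : ClassRepresents K n z h) : (K.d (n + 1) n).unop z = 0 := by
  obtain ⟨c, rfl, -⟩ := hz
  rw [unop_comp_apply, K.d_pOpcycles]
  rfl

theorem ClassRepresents.exists_class (z : (K.X n).unop) (hz : (K.d (n + 1) n).unop z = 0) :
    ∃ h, ClassRepresents K n z h := by
  have hexact := (ShortComplex.exact_of_g_is_cokernel
    (ShortComplex.mk (K.d (n + 1) n) (K.pOpcycles n) (K.d_pOpcycles _ _))
    (K.opcyclesIsCokernel (n + 1) n (by simp))).unop
  obtain ⟨c, hc⟩ := (ShortComplex.moduleCat_exact_iff _).1 hexact z hz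
  exact ⟨_, c, hc, rfl⟩

theorem ClassRepresents.map (φ : K ⟶ L) {z : (L.X n).unop} {h : (L.homology n).unop}
    (hz : ClassRepresents L n z h) :
    ClassRepresents K n ((φ.f n).unop z) ((HomologicalComplex.homologyMap φ n).unop h) := by
  obtain ⟨c, rfl, rfl⟩ := hz
  refine ⟨(HomologicalComplex.opcyclesMap φ n).unop c, ?_, ?_⟩
  · rw [unop_comp_apply, unop_comp_apply, HomologicalComplex.p_opcyclesMap]
  · rw [unop_comp_apply, unop_comp_apply, HomologicalComplex.homologyι_naturality]

theorem ClassRepresents.eq_zero_iff {j : ℕ} (hj : (ComplexShape.down ℕ).next n = j)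
    {z : (K.X n).unop} {h : (K.homology n).unop} (hz : ClassRepresents K n z h) :
    h = 0 ↔ ∃ w, (K.d n j).unop w = z := by
  have hexact := (ShortComplex.exact_of_f_is_kernel
    (ShortComplex.mk (K.homologyι n) (K.fromOpcycles n j) (K.homologyι_comp_fromOpcycles _ _))
    (K.homologyIsKernel n j hj)).unop
  have hd (w) : (K.pOpcycles n).unop ((K.fromOpcycles n j).unop w) = (K.d n j).unop w := by
    rw [unop_comp_apply, K.p_fromOpcycles]
  obtain ⟨c, rfl, rfl⟩ := hz
  constructor
  · intro h0
    obtain ⟨w, rfl⟩ := (ShortComplex.moduleCat_exact_iff _).1 hexact c h0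
    exact ⟨w, (hd w).symm⟩
  · rintro ⟨w, hw⟩
    obtain rfl : (K.fromOpcycles n j).unop w = c :=
      (ModuleCat.mono_iff_injective (K.pOpcycles n).unop).1 inferInstance ((hd w).trans hw)
    rw [unop_comp_apply, K.homologyι_comp_fromOpcycles]
    rfl

end ClassRepresents

section ExtComparison

open Abelian

variable {R : Type u} [CommRing R] {X X' Y : ModuleCat.{u} R} {n : ℕ}

theorem extMk_eq_zero_iff_of_zero (P : ProjectiveResolution X) (f : P.complex.X 0 ⟶ Y)
    (hf : P.complex.d 1 0 ≫ f = 0) : P.extMk f 1 rfl hf = 0 ↔ f = 0 := by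
  simp only [← P.extEquivCohomologyClass.apply_eq_iff_eq,
    ProjectiveResolution.extEquivCohomologyClass_extMk,
    ProjectiveResolution.extEquivCohomologyClass_zero,
    CochainComplex.HomComplex.CohomologyClass.mk_eq_zero_iff]
  rw [CochainComplex.HomComplex.Cocycle.toSingleMk_mem_coboundaries_iff _ _ _ _ _ 1 (by simp)]
  have hX₁ : IsZero (P.cochainComplex.X 1) :=
    HomologicalComplex.isZero_extend_X _ _ _ fun i => by
      simp only [ComplexShape.embeddingDownNat_f, ne_eq]
      lia
  constructor
  · rintro ⟨g, hg⟩
    rw [hX₁.eq_of_src g 0, comp_zero] at hg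
    rw [← cancel_epi (P.cochainComplexXIso (-(0 : ℕ)) 0 rfl).hom, ← hg, comp_zero]
  · rintro rfl
    exact ⟨0, by simp⟩

theorem extMk_eq_zero_iff_of_next (P : ProjectiveResolution X) {j : ℕ}
    (hj : (ComplexShape.down ℕ).next n = j) (f : P.complex.X n ⟶ Y)
    (hf : P.complex.d (n + 1) n ≫ f = 0) :
    P.extMk f (n + 1) rfl hf = 0 ↔ ∃ g : P.complex.X j ⟶ Y, P.complex.d n j ≫ g = f := by
  cases n with
  | zero =>
    rw [extMk_eq_zero_iff_of_zero P f hf, P.complex.shape _ _ (by simp)]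
    simp [eq_comm]
  | succ p =>
    obtain rfl : p = j := by simpa using hj
    exact P.extMk_eq_zero_iff f _ rfl hf p rfl

/-- The cochain `z : Pₙ ⟶ Y` is a cocycle with class `h` in `Ext R (ModuleCat R) n`, which Mathlib
defines as a left derived functor of `(linearYoneda _ _).rightOp`. -/
def ExtRepresents (P : ProjectiveResolution X) (z : P.complex.X n ⟶ Y)
    (h : ((Ext R (ModuleCat.{u} R) n).obj (op X)).obj Y) : Prop :=
  ClassRepresents
    ((((linearYoneda R (ModuleCat.{u} R)).obj Y).rightOp.mapHomologicalComplex _).obj P.complex)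
    n z ((P.isoLeftDerivedObj ((linearYoneda R _).obj Y).rightOp n).inv.unop h)

namespace ExtRepresents

theorem exists_cochain (P : ProjectiveResolution X)
    (h : ((Ext R (ModuleCat.{u} R) n).obj (op X)).obj Y) : ∃ z, ExtRepresents P z h :=
  ClassRepresents.exists_cochain (K :=
    (((linearYoneda R (ModuleCat.{u} R)).obj Y).rightOp.mapHomologicalComplex _).obj P.complex) _

variable {P : ProjectiveResolution X} {z : P.complex.X n ⟶ Y}
  {h : ((Ext R (ModuleCat.{u} R) n).obj (op X)).obj Y}

theorem isCocycle (hz : ExtRepresents P z h) : P.complex.d (n + 1) n ≫ z = 0 :=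
  ClassRepresents.isCocycle hz

theorem exists_class (hz : P.complex.d (n + 1) n ≫ z = 0) : ∃ h, ExtRepresents P z h := by
  obtain ⟨h, hh⟩ := ClassRepresents.exists_class (K :=
    (((linearYoneda R (ModuleCat.{u} R)).obj Y).rightOp.mapHomologicalComplex _).obj P.complex)
    z hz
  let e := P.isoLeftDerivedObj ((linearYoneda R (ModuleCat.{u} R)).obj Y).rightOp n
  refine ⟨e.hom.unop h, ?_⟩
  exact (congrArg (ClassRepresents _ n z) (congrArg (fun g => g.unop h) e.inv_hom_id)).mpr hh

theorem eq_zero_iff {j : ℕ} (hj : (ComplexShape.down ℕ).next n = j) (hz : ExtRepresents P z h) :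
    h = 0 ↔ ∃ w, P.complex.d n j ≫ w = z := by
  refine Iff.trans ?_ (ClassRepresents.eq_zero_iff hj hz)
  let e := P.isoLeftDerivedObj ((linearYoneda R (ModuleCat.{u} R)).obj Y).rightOp n
  have he := (ModuleCat.mono_iff_injective e.inv.unop).1 inferInstance
  exact (map_eq_zero_iff e.inv.unop.hom he).symm

theorem map {P' : ProjectiveResolution X'} {f : X' ⟶ X} (φ : P'.complex ⟶ P.complex)
    (hφ : φ.f 0 ≫ P.π.f 0 = P'.π.f 0 ≫ f) (hz : ExtRepresents P z h) :
    ExtRepresents P' (φ.f n ≫ z) (((Ext R (ModuleCat.{u} R) n).map f.op).app Y h) := by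
  let F := ((linearYoneda R (ModuleCat.{u} R)).obj Y).rightOp
  have hnat := congrArg (fun g => g.unop h)
    (ProjectiveResolution.isoLeftDerivedObj_inv_naturality f P' P φ hφ F n)
  exact (congrArg (ClassRepresents _ n _) hnat).mpr
    (ClassRepresents.map ((F.mapHomologicalComplex _).map φ) hz)

theorem map_eq_zero_iff (hz : ExtRepresents P z h) (f : X' ⟶ X) :
    ((Ext R (ModuleCat.{u} R) n).map f.op).app Y h = 0 ↔
      (Ext.mk₀ f).comp (P.extMk z (n + 1) rfl hz.isCocycle) (zero_add _) = 0 := by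
  let P' := projectiveResolution X'
  have hφ : (ProjectiveResolution.lift f P' P).f 0 ≫ P.π.f 0 = P'.π.f 0 ≫ f :=
    ProjectiveResolution.lift_commutes_zero f P' P
  rw [(hz.map _ hφ).eq_zero_iff rfl,
    ProjectiveResolution.mk₀_comp_extMk (R' := P') z _ rfl hz.isCocycle ⟨_, by simpa using hφ⟩,
    extMk_eq_zero_iff_of_next P' rfl]

end ExtRepresents

theorem exists_abelianExt_map_eq_zero_iff (h : ((Ext R (ModuleCat.{u} R) n).obj (op X)).obj Y) :
    ∃ e : Abelian.Ext X Y n, ∀ (X' : ModuleCat.{u} R) (f : X' ⟶ X),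
      ((Ext R (ModuleCat.{u} R) n).map f.op).app Y h = 0 ↔
        (Ext.mk₀ f).comp e (zero_add _) = 0 :=
  have ⟨_, hz⟩ := ExtRepresents.exists_cochain (projectiveResolution X) h
  ⟨_, fun _ => hz.map_eq_zero_iff⟩

theorem exists_ext_map_eq_zero_iff (e : Abelian.Ext X Y n) :
    ∃ h : ((Ext R (ModuleCat.{u} R) n).obj (op X)).obj Y, ∀ (X' : ModuleCat.{u} R) (f : X' ⟶ X),
      ((Ext R (ModuleCat.{u} R) n).map f.op).app Y h = 0 ↔
        (Ext.mk₀ f).comp e (zero_add _) = 0 := by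
  obtain ⟨z, hz, rfl⟩ := (projectiveResolution X).extMk_surjective e _ rfl
  obtain ⟨h, hh⟩ := ExtRepresents.exists_class hz
  exact ⟨h, fun _ => hh.map_eq_zero_iff⟩

theorem subsingleton_extM_iff (n : ℕ) (X Y : Type u) [AddCommGroup X] [Module R X]
    [AddCommGroup Y] [Module R Y] :
    Subsingleton (extM R n X Y) ↔
      Subsingleton (Abelian.Ext (ModuleCat.of R X) (ModuleCat.of R Y) n) := by
  constructor <;> intro hs <;> refine subsingleton_of_forall_eq 0 fun e => ?_
  · obtain ⟨h, hh⟩ := exists_ext_map_eq_zero_iff e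
    have := (hh _ (𝟙 _)).1 (by rw [Subsingleton.elim h 0]; exact map_zero _)
    rwa [Ext.mk₀_id_comp] at this
  · obtain ⟨h, hh⟩ := exists_abelianExt_map_eq_zero_iff e
    have := (hh _ (𝟙 _)).2 (by rw [Subsingleton.elim h 0, Ext.comp_zero])
    rwa [op_id, CategoryTheory.Functor.map_id] at this

end ExtComparison

end

/-! ### Ext of modules and its long exact sequences -/

noncomputable section

open Abelian

/-- A short exact sequence `0 → A → B → C → 0` of modules, given by its two unbundled maps. -/
structure IsShortExact {R : Type*} [CommRing R] {A B C : Type*} [AddCommGroup A] [AddCommGroup B]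
    [AddCommGroup C] [Module R A] [Module R B] [Module R C] (f : A →ₗ[R] B) (g : B →ₗ[R] C) :
    Prop where
  inj : Function.Injective f
  exact : Function.Exact f g
  surj : Function.Surjective g

/-- `Ext^i_R(X, Y)` for unbundled modules, as `Abelian.Ext`, for which Mathlib provides long exact
sequences. -/
abbrev ExtMod (R : Type u) [CommRing R] (X Y : Type u) [AddCommGroup X] [AddCommGroup Y]
    [Module R X] [Module R Y] (i : ℕ) : Type u :=
  Abelian.Ext (ModuleCat.of R X) (ModuleCat.of R Y) i

variable {R : Type u} [CommRing R]
variable {X X' X'' Y Y' Y'' A B C A' B' C' : Type u}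
variable [AddCommGroup X] [AddCommGroup X'] [AddCommGroup X''] [AddCommGroup Y] [AddCommGroup Y']
  [AddCommGroup Y''] [AddCommGroup A] [AddCommGroup B] [AddCommGroup C]
  [AddCommGroup A'] [AddCommGroup B'] [AddCommGroup C']
variable [Module R X] [Module R X'] [Module R X''] [Module R Y] [Module R Y'] [Module R Y'']
  [Module R A] [Module R B] [Module R C] [Module R A'] [Module R B'] [Module R C']
variable {i : ℕ}

namespace ExtMod

/-- The map `Ext^i(X, Y) → Ext^i(X, Y')` induced by `f : Y → Y'`. -/
def postcomp (f : Y →ₗ[R] Y') : ExtMod R X Y i →ₗ[R] ExtMod R X Y' i where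
  toFun e := e.comp (Ext.mk₀ (ModuleCat.ofHom f)) (add_zero _)
  map_add' := by simp
  map_smul' := by simp

/-- The map `Ext^i(X, Y) → Ext^i(X', Y)` induced by `f : X' → X`. -/
def precomp (f : X' →ₗ[R] X) : ExtMod R X Y i →ₗ[R] ExtMod R X' Y i where
  toFun e := (Ext.mk₀ (ModuleCat.ofHom f)).comp e (zero_add _)
  map_add' := by simp
  map_smul' := by simp

theorem postcomp_apply (f : Y →ₗ[R] Y') (e : ExtMod R X Y i) :
    postcomp f e = e.comp (Ext.mk₀ (ModuleCat.ofHom f)) (add_zero _) := rfl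

theorem precomp_apply (f : X' →ₗ[R] X) (e : ExtMod R X Y i) :
    precomp f e = (Ext.mk₀ (ModuleCat.ofHom f)).comp e (zero_add _) := rfl

@[simp]
theorem postcomp_id (e : ExtMod R X Y i) : postcomp LinearMap.id e = e := by
  simp [postcomp_apply, ModuleCat.ofHom_id]

@[simp]
theorem precomp_id (e : ExtMod R X Y i) : precomp LinearMap.id e = e := by
  simp [precomp_apply, ModuleCat.ofHom_id]

theorem postcomp_postcomp (f : Y →ₗ[R] Y') (g : Y' →ₗ[R] Y'') (e : ExtMod R X Y i) :
    postcomp g (postcomp f e) = postcomp (g ∘ₗ f) e := by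
  simp [postcomp_apply, ModuleCat.ofHom_comp]

theorem precomp_precomp (f : X'' →ₗ[R] X') (g : X' →ₗ[R] X) (e : ExtMod R X Y i) :
    precomp f (precomp g e) = precomp (g ∘ₗ f) e := by
  simp [precomp_apply, ModuleCat.ofHom_comp]

theorem precomp_postcomp (f : X' →ₗ[R] X) (g : Y →ₗ[R] Y') (e : ExtMod R X Y i) :
    precomp f (postcomp g e) = postcomp g (precomp f e) := by
  simp only [postcomp_apply, precomp_apply]
  rw [Ext.comp_assoc_of_third_deg_zero]

theorem postcomp_add (f g : Y →ₗ[R] Y') (e : ExtMod R X Y i) :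
    postcomp (f + g) e = postcomp f e + postcomp g e := by
  simp [postcomp_apply, ModuleCat.ofHom_add, Ext.mk₀_add]

theorem postcomp_zero (e : ExtMod R X Y i) : postcomp (0 : Y →ₗ[R] Y') e = 0 := by
  have : ModuleCat.ofHom (0 : Y →ₗ[R] Y') = 0 := rfl
  simp [postcomp_apply, this]

theorem precomp_zero (e : ExtMod R X Y i) : precomp (0 : X' →ₗ[R] X) e = 0 := by
  have : ModuleCat.ofHom (0 : X' →ₗ[R] X) = 0 := rfl
  simp [precomp_apply, this]

theorem postcomp_smul (r : R) (f : Y →ₗ[R] Y') (e : ExtMod R X Y i) :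
    postcomp (r • f) e = r • postcomp f e := by
  have : ModuleCat.ofHom (r • f) = r • ModuleCat.ofHom f := rfl
  simp [postcomp_apply, this, Ext.mk₀_smul]

theorem precomp_smul (r : R) (f : X' →ₗ[R] X) (e : ExtMod R X Y i) :
    precomp (r • f) e = r • precomp f e := by
  have : ModuleCat.ofHom (r • f) = r • ModuleCat.ofHom f := rfl
  simp [precomp_apply, this, Ext.mk₀_smul]

/-- The class in `Ext^0(X, Y)` of a linear map. -/
def ofHom (f : X →ₗ[R] Y) : ExtMod R X Y 0 := Ext.mk₀ (ModuleCat.ofHom f)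

theorem ofHom_injective : Function.Injective (ofHom : (X →ₗ[R] Y) → ExtMod R X Y 0) :=
  fun _ _ h => congrArg ModuleCat.Hom.hom ((Ext.mk₀_bijective _ _).1 h)

theorem ofHom_surjective : Function.Surjective (ofHom : (X →ₗ[R] Y) → ExtMod R X Y 0) :=
  fun e => have ⟨f, hf⟩ := (Ext.mk₀_bijective _ _).2 e; ⟨f.hom, hf⟩

theorem ofHom_eq_zero_iff (f : X →ₗ[R] Y) : ofHom f = 0 ↔ f = 0 :=
  (Ext.mk₀_eq_zero_iff _).trans ⟨congrArg ModuleCat.Hom.hom, fun h => h ▸ rfl⟩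

theorem precomp_ofHom (f : X' →ₗ[R] X) (g : X →ₗ[R] Y) :
    precomp f (ofHom g) = ofHom (g ∘ₗ f) := by
  simp [precomp_apply, ofHom, ModuleCat.ofHom_comp]

theorem postcomp_ofHom (f : X →ₗ[R] Y) (g : Y →ₗ[R] Y') :
    postcomp g (ofHom f) = ofHom (g ∘ₗ f) := by
  simp [postcomp_apply, ofHom, ModuleCat.ofHom_comp]

theorem subsingleton_of_projective [Module.Projective R X] (i : ℕ) :
    Subsingleton (ExtMod R X Y (i + 1)) :=
  have : Projective (ModuleCat.of R X) :=
    (IsProjective.iff_projective (ModuleCat.of R X)).1 inferInstance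
  Abelian.Ext.subsingleton_of_projective _ _ _

theorem subsingleton_congr_left (e : X ≃ₗ[R] X') (h : Subsingleton (ExtMod R X Y i)) :
    Subsingleton (ExtMod R X' Y i) := by
  refine subsingleton_of_forall_eq 0 fun a => ?_
  have : precomp e.symm.toLinearMap (precomp e.toLinearMap a) = a := by simp [precomp_precomp]
  rw [← this, Subsingleton.elim (precomp e.toLinearMap a) 0, map_zero]

theorem subsingleton_congr_right (e : Y ≃ₗ[R] Y') (h : Subsingleton (ExtMod R X Y i)) :
    Subsingleton (ExtMod R X Y' i) := by
  refine subsingleton_of_forall_eq 0 fun a => ?_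
  have : postcomp e.toLinearMap (postcomp e.symm.toLinearMap a) = a := by
    simp [postcomp_postcomp]
  rw [← this, Subsingleton.elim (postcomp e.symm.toLinearMap a) 0, map_zero]

end ExtMod

namespace IsShortExact

theorem of_ker {g : B →ₗ[R] C} (hg : Function.Surjective g) :
    IsShortExact (LinearMap.ker g).subtype g where
  inj := Subtype.val_injective
  exact := LinearMap.exact_subtype_ker_map g
  surj := hg

theorem of_submodule (N : Submodule R B) : IsShortExact N.subtype N.mkQ where
  inj := Subtype.val_injective
  exact := LinearMap.exact_subtype_mkQ N
  surj := N.mkQ_surjective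

theorem of_injective {f : A →ₗ[R] B} (hf : Function.Injective f) :
    IsShortExact f (LinearMap.range f).mkQ where
  inj := hf
  exact := LinearMap.exact_map_mkQ_range f
  surj := Submodule.mkQ_surjective _

variable {f : A →ₗ[R] B} {g : B →ₗ[R] C}

theorem shortExact (h : IsShortExact f g) :
    (ShortComplex.mk (ModuleCat.ofHom f) (ModuleCat.ofHom g)
      (by ext x; exact h.exact.apply_apply_eq_zero x)).ShortExact where
  exact := (ShortComplex.moduleCat_exact_iff _).2 fun x hx => (h.exact x).1 hx
  mono_f := (ModuleCat.mono_iff_injective _).2 h.inj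
  epi_g := (ModuleCat.epi_iff_surjective _).2 h.surj

/-- The class in `Ext^1(C, A)` of a short exact sequence. -/
def extClass (h : IsShortExact f g) : ExtMod R C A 1 := h.shortExact.extClass

/-- The connecting map `Ext^i(X, C) → Ext^{i+1}(X, A)`. -/
def connecting (h : IsShortExact f g) (X : Type u) [AddCommGroup X] [Module R X] (i : ℕ) :
    ExtMod R X C i →ₗ[R] ExtMod R X A (i + 1) where
  toFun e := Ext.comp e h.extClass rfl
  map_add' := by simp
  map_smul' := by simp

theorem exists_connecting_eq (h : IsShortExact f g) (e : ExtMod R X A (i + 1))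
    (he : ExtMod.postcomp f e = 0) : ∃ e', h.connecting X i e' = e :=
  Ext.covariant_sequence_exact₁ (X := ModuleCat.of R X) h.shortExact e he rfl

theorem exists_postcomp_eq (h : IsShortExact f g) (e : ExtMod R X B i)
    (he : ExtMod.postcomp g e = 0) : ∃ e', ExtMod.postcomp f e' = e :=
  Ext.covariant_sequence_exact₂ (X := ModuleCat.of R X) h.shortExact e he

theorem exists_postcomp_eq_of_connecting_eq_zero (h : IsShortExact f g) (e : ExtMod R X C i)
    (he : h.connecting X i e = 0) : ∃ e', ExtMod.postcomp g e' = e :=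
  Ext.covariant_sequence_exact₃ (X := ModuleCat.of R X) h.shortExact e rfl he

theorem eq_zero_of_postcomp_eq_zero (h : IsShortExact f g) (e : ExtMod R X A 0)
    (he : ExtMod.postcomp f e = 0) : e = 0 := by
  obtain ⟨a, rfl⟩ := ExtMod.ofHom_surjective e
  rw [ExtMod.postcomp_ofHom, ExtMod.ofHom_eq_zero_iff] at he
  rw [ExtMod.ofHom_eq_zero_iff]
  ext x
  exact h.inj (by simpa using LinearMap.congr_fun he x)

theorem precomp_connecting (h : IsShortExact f g) (t : X' →ₗ[R] X) (e : ExtMod R X C i) :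
    ExtMod.precomp t (h.connecting X i e) = h.connecting X' i (ExtMod.precomp t e) :=
  (Ext.comp_assoc _ e h.extClass (by lia) rfl (by omega)).symm

/-- The connecting map `Ext^i(A, Y) → Ext^{i+1}(C, Y)`. -/
def contraConnecting (h : IsShortExact f g) (Y : Type u) [AddCommGroup Y] [Module R Y] (i : ℕ) :
    ExtMod R A Y i →ₗ[R] ExtMod R C Y (i + 1) where
  toFun e := Ext.comp h.extClass e (add_comm _ _)
  map_add' := by simp
  map_smul' := by simp

theorem exists_precomp_eq_of_contraConnecting_eq_zero (h : IsShortExact f g)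
    (e : ExtMod R A Y i) (he : h.contraConnecting Y i e = 0) : ∃ e', ExtMod.precomp f e' = e :=
  Ext.contravariant_sequence_exact₁ (Y := ModuleCat.of R Y) h.shortExact e (add_comm _ _) he

theorem exists_precomp_eq (h : IsShortExact f g) (e : ExtMod R B Y i)
    (he : ExtMod.precomp f e = 0) : ∃ e', ExtMod.precomp g e' = e :=
  Ext.contravariant_sequence_exact₂ (Y := ModuleCat.of R Y) h.shortExact e he

theorem exists_contraConnecting_eq (h : IsShortExact f g) (e : ExtMod R C Y (i + 1))
    (he : ExtMod.precomp g e = 0) : ∃ e', h.contraConnecting Y i e' = e :=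
  Ext.contravariant_sequence_exact₃ (Y := ModuleCat.of R Y) h.shortExact e he (add_comm _ _)

theorem contraConnecting_precomp (h : IsShortExact f g) (e : ExtMod R B Y i) :
    h.contraConnecting Y i (ExtMod.precomp f e) = 0 := by
  change h.extClass.comp ((Ext.mk₀ (ModuleCat.ofHom f)).comp e (by lia)) (by omega) = 0
  rw [← Ext.comp_assoc_of_second_deg_zero]
  exact (congrArg (Ext.comp · e _) h.shortExact.extClass_comp).trans (Ext.zero_comp ..)

section Naturality

variable {f' : A' →ₗ[R] B'} {g' : B' →ₗ[R] C'} {a : A →ₗ[R] A'} {b : B →ₗ[R] B'} {c : C →ₗ[R] C'}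

theorem postcomp_extClass (h : IsShortExact f g) (h' : IsShortExact f' g')
    (hab : b ∘ₗ f = f' ∘ₗ a) (hbc : c ∘ₗ g = g' ∘ₗ b) :
    ExtMod.postcomp a h.extClass = ExtMod.precomp c h'.extClass :=
  ShortComplex.ShortExact.extClass_naturality h.shortExact h'.shortExact
    { τ₁ := ModuleCat.ofHom a, τ₂ := ModuleCat.ofHom b, τ₃ := ModuleCat.ofHom c
      comm₁₂ := by ext x; exact (LinearMap.congr_fun hab x).symm
      comm₂₃ := by ext x; exact (LinearMap.congr_fun hbc x).symm }

theorem precomp_contraConnecting (h : IsShortExact f g) (h' : IsShortExact f' g')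
    (hab : b ∘ₗ f = f' ∘ₗ a) (hbc : c ∘ₗ g = g' ∘ₗ b) (e : ExtMod R A' Y i) :
    ExtMod.precomp c (h'.contraConnecting Y i e) =
      h.contraConnecting Y i (ExtMod.precomp a e) := by
  change (Ext.mk₀ (ModuleCat.ofHom c)).comp (h'.extClass.comp e (by lia)) (by omega) =
    h.extClass.comp ((Ext.mk₀ (ModuleCat.ofHom a)).comp e (by lia)) (by omega)
  rw [← Ext.comp_assoc_of_second_deg_zero, ← ExtMod.postcomp_apply,
    h.postcomp_extClass h' hab hbc, ExtMod.precomp_apply, Ext.comp_assoc]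
  lia

end Naturality

theorem subsingleton_ext_left (h : IsShortExact f g) (hC : Subsingleton (ExtMod R X C i))
    (hB : Subsingleton (ExtMod R X B (i + 1))) : Subsingleton (ExtMod R X A (i + 1)) := by
  refine subsingleton_of_forall_eq 0 fun e => ?_
  obtain ⟨e', rfl⟩ := h.exists_connecting_eq e (Subsingleton.elim _ _)
  rw [Subsingleton.elim e' 0, map_zero]

theorem subsingleton_ext_left_zero (h : IsShortExact f g) (_ : Subsingleton (ExtMod R X B 0)) :
    Subsingleton (ExtMod R X A 0) :=
  subsingleton_of_forall_eq 0 fun e => h.eq_zero_of_postcomp_eq_zero e (Subsingleton.elim _ _)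

theorem subsingleton_ext_right (h : IsShortExact f g) (hB : Subsingleton (ExtMod R X B i))
    (hA : Subsingleton (ExtMod R X A (i + 1))) : Subsingleton (ExtMod R X C i) := by
  refine subsingleton_of_forall_eq 0 fun e => ?_
  obtain ⟨e', rfl⟩ := h.exists_postcomp_eq_of_connecting_eq_zero e (Subsingleton.elim _ _)
  rw [Subsingleton.elim e' 0, map_zero]

theorem subsingleton_ext_contra_mid (h : IsShortExact f g) (hA : Subsingleton (ExtMod R A Y i))
    (hC : Subsingleton (ExtMod R C Y i)) : Subsingleton (ExtMod R B Y i) := by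
  refine subsingleton_of_forall_eq 0 fun e => ?_
  obtain ⟨e', rfl⟩ := h.exists_precomp_eq e (Subsingleton.elim _ _)
  rw [Subsingleton.elim e' 0, map_zero]

theorem subsingleton_ext_contra_left (h : IsShortExact f g) (hB : Subsingleton (ExtMod R B Y i))
    (hC : Subsingleton (ExtMod R C Y (i + 1))) : Subsingleton (ExtMod R A Y i) := by
  refine subsingleton_of_forall_eq 0 fun e => ?_
  obtain ⟨e', rfl⟩ :=
    h.exists_precomp_eq_of_contraConnecting_eq_zero e (Subsingleton.elim _ _)
  rw [Subsingleton.elim e' 0, map_zero]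

theorem subsingleton_ext_contra_right (h : IsShortExact f g) (hA : Subsingleton (ExtMod R A Y i))
    (hB : Subsingleton (ExtMod R B Y (i + 1))) : Subsingleton (ExtMod R C Y (i + 1)) := by
  refine subsingleton_of_forall_eq 0 fun e => ?_
  obtain ⟨e', rfl⟩ := h.exists_contraConnecting_eq e (Subsingleton.elim _ _)
  rw [Subsingleton.elim e' 0, map_zero]

theorem subsingleton_ext_one_of_exists_extension (h : IsShortExact f g)
    (hext : ∀ φ : A →ₗ[R] Y, ∃ ψ : B →ₗ[R] Y, ψ ∘ₗ f = φ)
    (hB : Subsingleton (ExtMod R B Y 1)) : Subsingleton (ExtMod R C Y 1) := by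
  refine subsingleton_of_forall_eq 0 fun e => ?_
  obtain ⟨e', rfl⟩ := h.exists_contraConnecting_eq e (Subsingleton.elim _ _)
  obtain ⟨φ, rfl⟩ := ExtMod.ofHom_surjective e'
  obtain ⟨ψ, rfl⟩ := hext φ
  rw [← ExtMod.precomp_ofHom, h.contraConnecting_precomp]

theorem exists_extension_of_subsingleton_ext_one (h : IsShortExact f g)
    (hC : Subsingleton (ExtMod R C Y 1)) (φ : A →ₗ[R] Y) : ∃ ψ : B →ₗ[R] Y, ψ ∘ₗ f = φ := by
  obtain ⟨e, he⟩ := h.exists_precomp_eq_of_contraConnecting_eq_zero (ExtMod.ofHom φ)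
    (Subsingleton.elim _ _)
  obtain ⟨ψ, rfl⟩ := ExtMod.ofHom_surjective e
  exact ⟨ψ, ExtMod.ofHom_injective (by rw [← he, ExtMod.precomp_ofHom])⟩

end IsShortExact

end

/-! ### Local cohomology as a direct limit of Ext modules -/

noncomputable section

open Limits Opposite

variable {R : Type u} [CommRing R]
variable {N A B C : Type u} [AddCommGroup N] [AddCommGroup A] [AddCommGroup B] [AddCommGroup C]
  [Module R N] [Module R A] [Module R B] [Module R C]

/-- The transition map `Ext^i(R/I^n, N) → Ext^i(R/I^m, N)` of the direct system computing local
cohomology. -/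
def powTransition (I : Ideal R) (N : Type u) [AddCommGroup N] [Module R N] (i n m : ℕ)
    (h : n ≤ m) : ExtMod R (R ⧸ I ^ n) N i →ₗ[R] ExtMod R (R ⧸ I ^ m) N i :=
  ExtMod.precomp (Submodule.factor (Ideal.pow_le_pow_right h))

instance (I : Ideal R) (i : ℕ) : DirectedSystem (fun n => ExtMod R (R ⧸ I ^ n) N i)
    (fun n m h => powTransition I N i n m h) where
  map_self n x := by
    have : Submodule.factor (Ideal.pow_le_pow_right (I := I) le_rfl) = LinearMap.id (R := R) :=
      Submodule.mapQ_id (I ^ n)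
    exact (congrArg (ExtMod.precomp · x) this).trans (ExtMod.precomp_id x)
  map_map k j i hij hjk x := by
    have := Submodule.factor_comp (Ideal.pow_le_pow_right (I := I) hjk)
      (Ideal.pow_le_pow_right (I := I) hij)
    exact (ExtMod.precomp_precomp _ _ x).trans (congrArg (ExtMod.precomp · x) this)

/-- The local cohomology module `H^i_I(N)`, as the direct limit of the `Ext^i(R/I^n, N)`. -/
def LocalCoh (I : Ideal R) (N : Type u) [AddCommGroup N] [Module R N] (i : ℕ) : Type u :=
  Module.DirectLimit (fun n => ExtMod R (R ⧸ I ^ n) N i) (powTransition I N i)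

instance (I : Ideal R) (i : ℕ) : AddCommGroup (LocalCoh I N i) :=
  inferInstanceAs (AddCommGroup
    (Module.DirectLimit (fun n => ExtMod R (R ⧸ I ^ n) N i) (powTransition I N i)))

instance (I : Ideal R) (i : ℕ) : Module R (LocalCoh I N i) :=
  inferInstanceAs (Module R
    (Module.DirectLimit (fun n => ExtMod R (R ⧸ I ^ n) N i) (powTransition I N i)))

namespace LocalCoh

variable {I : Ideal R} {i n m : ℕ}

/-- The canonical map `Ext^i(R/I^n, N) → H^i_I(N)`. -/
def of (I : Ideal R) (N : Type u) [AddCommGroup N] [Module R N] (i n : ℕ) :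
    ExtMod R (R ⧸ I ^ n) N i →ₗ[R] LocalCoh I N i :=
  Module.DirectLimit.of R ℕ (fun n => ExtMod R (R ⧸ I ^ n) N i) (powTransition I N i) n

theorem of_powTransition (h : n ≤ m) (e : ExtMod R (R ⧸ I ^ n) N i) :
    of I N i m (powTransition I N i n m h e) = of I N i n e :=
  Module.DirectLimit.of_f

theorem exists_of (x : LocalCoh I N i) : ∃ n e, of I N i n e = x :=
  Module.DirectLimit.exists_of x

theorem exists_powTransition_eq_zero {e : ExtMod R (R ⧸ I ^ n) N i} (he : of I N i n e = 0) :
    ∃ m, ∃ h : n ≤ m, powTransition I N i n m h e = 0 := by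
  obtain ⟨m, hm, h⟩ := Module.DirectLimit.of.zero_exact he
  exact ⟨m, hm, h⟩

theorem subsingleton_iff : Subsingleton (LocalCoh I N i) ↔
    ∀ n (e : ExtMod R (R ⧸ I ^ n) N i), ∃ m, ∃ h : n ≤ m, powTransition I N i n m h e = 0 := by
  refine ⟨fun _ n e => exists_powTransition_eq_zero (Subsingleton.elim (of I N i n e) 0),
    fun h => subsingleton_of_forall_eq 0 fun x => ?_⟩
  obtain ⟨n, e, rfl⟩ := exists_of x
  obtain ⟨m, hm, h0⟩ := h n e
  rw [← of_powTransition hm, h0, map_zero]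

/-- The map `H^i_I(A) → H^i_I(B)` induced by `f : A → B`. -/
def map (I : Ideal R) (i : ℕ) (f : A →ₗ[R] B) : LocalCoh I A i →ₗ[R] LocalCoh I B i :=
  Module.DirectLimit.map (fun _ => ExtMod.postcomp f)
    fun _ _ _ => LinearMap.ext fun _ => (ExtMod.precomp_postcomp _ _ _).symm

theorem map_of (f : A →ₗ[R] B) (e : ExtMod R (R ⧸ I ^ n) A i) :
    map I i f (of I A i n e) = of I B i n (ExtMod.postcomp f e) :=
  Module.DirectLimit.map_apply_of _ _ _

theorem map_map (f : A →ₗ[R] B) (g : B →ₗ[R] C) (x : LocalCoh I A i) :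
    map I i g (map I i f x) = map I i (g ∘ₗ f) x := by
  obtain ⟨n, e, rfl⟩ := exists_of x
  rw [map_of, map_of, map_of, ExtMod.postcomp_postcomp]

theorem map_id (x : LocalCoh I A i) : map I i LinearMap.id x = x := by
  obtain ⟨n, e, rfl⟩ := exists_of x
  rw [map_of, ExtMod.postcomp_id]

theorem map_smul (r : R) (f : A →ₗ[R] B) (x : LocalCoh I A i) :
    map I i (r • f) x = r • map I i f x := by
  obtain ⟨n, e, rfl⟩ := exists_of x
  rw [map_of, map_of, ExtMod.postcomp_smul, _root_.map_smul]

theorem map_add (f g : A →ₗ[R] B) (x : LocalCoh I A i) :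
    map I i (f + g) x = map I i f x + map I i g x := by
  obtain ⟨n, e, rfl⟩ := exists_of x
  rw [map_of, map_of, map_of, ExtMod.postcomp_add, _root_.map_add]

theorem map_zero (x : LocalCoh I A i) : map I i (0 : A →ₗ[R] B) x = 0 := by
  obtain ⟨n, e, rfl⟩ := exists_of x
  rw [map_of, ExtMod.postcomp_zero, _root_.map_zero]

theorem powTransition_postcomp (f : A →ₗ[R] B) (h : n ≤ m) (e : ExtMod R (R ⧸ I ^ n) A i) :
    powTransition I B i n m h (ExtMod.postcomp f e) =
      ExtMod.postcomp f (powTransition I A i n m h e) :=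
  ExtMod.precomp_postcomp _ _ _

variable {f : A →ₗ[R] B} {g : B →ₗ[R] C}

/-- The connecting map `H^i_I(C) → H^{i+1}_I(A)` of a short exact sequence. -/
def connecting (I : Ideal R) (i : ℕ) (h : IsShortExact f g) :
    LocalCoh I C i →ₗ[R] LocalCoh I A (i + 1) :=
  Module.DirectLimit.map (fun _ => h.connecting _ i)
    fun _ _ _ => LinearMap.ext fun _ => (h.precomp_connecting _ _).symm

theorem connecting_of (h : IsShortExact f g) (e : ExtMod R (R ⧸ I ^ n) C i) :
    connecting I i h (of I C i n e) = of I A (i + 1) n (h.connecting _ i e) :=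
  Module.DirectLimit.map_apply_of _ _ _

theorem powTransition_connecting (hs : IsShortExact f g) (h : n ≤ m)
    (e : ExtMod R (R ⧸ I ^ n) C i) :
    powTransition I A (i + 1) n m h (hs.connecting _ i e) =
      hs.connecting _ i (powTransition I C i n m h e) :=
  hs.precomp_connecting _ _

theorem eq_zero_of_map_eq_zero (h : IsShortExact f g) (x : LocalCoh I A 0)
    (hx : map I 0 f x = 0) : x = 0 := by
  obtain ⟨n, e, rfl⟩ := exists_of x
  rw [map_of] at hx
  obtain ⟨m, hm, h0⟩ := exists_powTransition_eq_zero hx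
  rw [powTransition_postcomp] at h0
  rw [← of_powTransition hm, h.eq_zero_of_postcomp_eq_zero _ h0, _root_.map_zero]

theorem exists_connecting_eq (h : IsShortExact f g) (x : LocalCoh I A (i + 1))
    (hx : map I (i + 1) f x = 0) : ∃ y, connecting I i h y = x := by
  obtain ⟨n, e, rfl⟩ := exists_of x
  rw [map_of] at hx
  obtain ⟨m, hm, h0⟩ := exists_powTransition_eq_zero hx
  rw [powTransition_postcomp] at h0
  obtain ⟨e', he'⟩ := h.exists_connecting_eq _ h0
  exact ⟨of _ _ _ _ e', by rw [connecting_of, he', of_powTransition]⟩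

theorem exists_map_eq (h : IsShortExact f g) (x : LocalCoh I B i) (hx : map I i g x = 0) :
    ∃ y, map I i f y = x := by
  obtain ⟨n, e, rfl⟩ := exists_of x
  rw [map_of] at hx
  obtain ⟨m, hm, h0⟩ := exists_powTransition_eq_zero hx
  rw [powTransition_postcomp] at h0
  obtain ⟨e', he'⟩ := h.exists_postcomp_eq _ h0
  exact ⟨of _ _ _ _ e', by rw [map_of, he', of_powTransition]⟩

theorem exists_map_eq_of_connecting_eq_zero (h : IsShortExact f g) (x : LocalCoh I C i)
    (hx : connecting I i h x = 0) : ∃ y, map I i g y = x := by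
  obtain ⟨n, e, rfl⟩ := exists_of x
  rw [connecting_of] at hx
  obtain ⟨m, hm, h0⟩ := exists_powTransition_eq_zero hx
  rw [powTransition_connecting] at h0
  obtain ⟨e', he'⟩ := h.exists_postcomp_eq_of_connecting_eq_zero _ h0
  exact ⟨of _ _ _ _ e', by rw [map_of, he', of_powTransition]⟩

theorem subsingleton_mid (h : IsShortExact f g) (hA : Subsingleton (LocalCoh I A i))
    (hC : Subsingleton (LocalCoh I C i)) : Subsingleton (LocalCoh I B i) := by
  refine subsingleton_of_forall_eq 0 fun x => ?_
  obtain ⟨y, rfl⟩ := exists_map_eq h x (Subsingleton.elim _ _)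
  rw [Subsingleton.elim y 0, _root_.map_zero]

theorem subsingleton_left (h : IsShortExact f g) (hC : Subsingleton (LocalCoh I C i))
    (hB : Subsingleton (LocalCoh I B (i + 1))) : Subsingleton (LocalCoh I A (i + 1)) := by
  refine subsingleton_of_forall_eq 0 fun x => ?_
  obtain ⟨y, rfl⟩ := exists_connecting_eq h x (Subsingleton.elim _ _)
  rw [Subsingleton.elim y 0, _root_.map_zero]

theorem subsingleton_left_zero (h : IsShortExact f g) (_ : Subsingleton (LocalCoh I B 0)) :
    Subsingleton (LocalCoh I A 0) :=
  subsingleton_of_forall_eq 0 fun x => eq_zero_of_map_eq_zero h x (Subsingleton.elim _ _)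

theorem subsingleton_right (h : IsShortExact f g) (hB : Subsingleton (LocalCoh I B i))
    (hA : Subsingleton (LocalCoh I A (i + 1))) : Subsingleton (LocalCoh I C i) := by
  refine subsingleton_of_forall_eq 0 fun x => ?_
  obtain ⟨y, rfl⟩ := exists_map_eq_of_connecting_eq_zero h x (Subsingleton.elim _ _)
  rw [Subsingleton.elim y 0, _root_.map_zero]

theorem subsingleton_of_subsingleton [Subsingleton A] : Subsingleton (LocalCoh I A i) :=
  subsingleton_of_forall_eq 0 fun x => by
    rw [← map_id x, Subsingleton.elim LinearMap.id (0 : A →ₗ[R] A), map_zero]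

end LocalCoh

theorem subsingleton_isColimit_pt_iff {J : Type} [SmallCategory J] [IsFiltered J]
    {K : J ⥤ ModuleCat.{u} R} {c : Cocone K} (hc : IsColimit c) :
    Subsingleton c.pt ↔ ∀ j (x : K.obj j), ∃ k, ∃ f : j ⟶ k, K.map f x = 0 := by
  have : PreservesFilteredColimitsOfSize.{0, 0} (forget (ModuleCat.{u} R)) :=
    preservesFilteredColimitsOfSize_shrink.{0, u, 0, u} _
  constructor
  · intro hs j x
    obtain ⟨k, a, b, hk⟩ := (Concrete.isColimit_rep_eq_iff_exists _ hc x (0 : K.obj j)).1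
      (@Subsingleton.elim c.pt hs _ _)
    exact ⟨k, a, hk.trans (map_zero _)⟩
  · refine fun h => subsingleton_of_forall_eq 0 fun x => ?_
    obtain ⟨j, y, rfl⟩ := Concrete.isColimit_exists_rep _ hc x
    obtain ⟨k, f, hf⟩ := h j y
    rw [← c.w f]
    exact (congrArg (c.ι.app k) hf).trans (map_zero _)

theorem subsingleton_colimit_obj_iff {J : Type} [SmallCategory J] [IsFiltered J]
    (D : J ⥤ ModuleCat.{u} R ⥤ ModuleCat.{u} R) (N : ModuleCat.{u} R) :
    Subsingleton ((colimit D).obj N) ↔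
      ∀ j (x : (D.obj j).obj N), ∃ k, ∃ f : j ⟶ k, (D.map f).app N x = 0 :=
  subsingleton_isColimit_pt_iff (isColimitOfPreserves
    ((evaluation (ModuleCat.{u} R) (ModuleCat.{u} R)).obj N) (colimit.isColimit D))

theorem subsingleton_locCoh_iff_forall_extM (I : Ideal R) (i : ℕ) (N : Type u) [AddCommGroup N]
    [Module R N] :
    Subsingleton (locCoh R I i N) ↔
      ∀ (n : ℕ) (x : extM R i (R ⧸ I ^ n) N), ∃ m, ∃ h : n ≤ m,
        ((Ext R (ModuleCat.{u} R) i).map (ModuleCat.ofHom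
          (Submodule.factor (Ideal.pow_le_pow_right h) :
            (R ⧸ I ^ m) →ₗ[R] (R ⧸ I ^ n))).op).app (ModuleCat.of R N) x = 0 := by
  refine (subsingleton_colimit_obj_iff
    (localCohomology.diagram (localCohomology.idealPowersDiagram I) i) _).trans ⟨?_, ?_⟩
  · intro h n x
    obtain ⟨k, f, hf⟩ := h (op (op n)) x
    exact ⟨k.unop.unop, leOfHom f.unop.unop, hf⟩
  · intro h j x
    obtain ⟨m, hm, hf⟩ := h j.unop.unop x
    exact ⟨op (op m), (homOfLE hm).op.op, hf⟩

theorem subsingleton_locCoh_iff (I : Ideal R) (i : ℕ) (N : Type u) [AddCommGroup N]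
    [Module R N] : Subsingleton (locCoh R I i N) ↔ Subsingleton (LocalCoh I N i) := by
  rw [LocalCoh.subsingleton_iff, subsingleton_locCoh_iff_forall_extM]
  constructor
  · intro h n e
    obtain ⟨x, hx⟩ := exists_ext_map_eq_zero_iff e
    obtain ⟨m, hm, h0⟩ := h n x
    exact ⟨m, hm, (hx _ _).1 h0⟩
  · intro h n x
    obtain ⟨e, he⟩ := exists_abelianExt_map_eq_zero_iff x
    obtain ⟨m, hm, h0⟩ := h n e
    exact ⟨m, hm, (he _ _).2 h0⟩

end

/-! ### Projective resolutions -/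

noncomputable section

/-- A resolution of `M` by finitely generated projective modules, not assumed to be minimal. -/
structure FiniteProjRes (R : Type u) [CommRing R] (M : Type u) [AddCommGroup M] [Module R M] where
  P : ℕ → Type u
  [addCommGroup : ∀ i, AddCommGroup (P i)]
  [module : ∀ i, Module R (P i)]
  [projective : ∀ i, Module.Projective R (P i)]
  [finite : ∀ i, Module.Finite R (P i)]
  d : (i : ℕ) → P (i + 1) →ₗ[R] P i
  ε : P 0 →ₗ[R] M
  surj : Function.Surjective ε
  exact_zero : LinearMap.range (d 0) = LinearMap.ker ε
  exact : ∀ i, LinearMap.range (d (i + 1)) = LinearMap.ker (d i)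

attribute [instance] FiniteProjRes.addCommGroup FiniteProjRes.module FiniteProjRes.projective
  FiniteProjRes.finite

variable {R : Type u} [CommRing R]
variable {M A B C Y : Type u} [AddCommGroup M] [AddCommGroup A] [AddCommGroup B] [AddCommGroup C]
  [AddCommGroup Y]
variable [Module R M] [Module R A] [Module R B] [Module R C] [Module R Y]

theorem IsShortExact.exists_comp_eq {f : A →ₗ[R] B} {g : B →ₗ[R] C} (h : IsShortExact f g)
    {φ : B →ₗ[R] Y} (hφ : φ ∘ₗ f = 0) : ∃ ψ : C →ₗ[R] Y, ψ ∘ₗ g = φ :=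
  (LinearMap.exact_lcomp_of_exact_of_surjective Y h.exact h.surj φ).1 hφ

namespace FiniteProjRes

/-- The resolution of the first syzygy obtained by dropping the term `P 0`. -/
def syzygyRes (F : FiniteProjRes R M) : FiniteProjRes R (LinearMap.range (F.d 0)) where
  P i := F.P (i + 1)
  d i := F.d (i + 1)
  ε := (F.d 0).rangeRestrict
  surj := LinearMap.surjective_rangeRestrict _
  exact_zero := by rw [LinearMap.ker_rangeRestrict, F.exact 0]
  exact i := F.exact (i + 1)

theorem isShortExact_ε (F : FiniteProjRes R M) :
    IsShortExact (LinearMap.range (F.d 0)).subtype F.ε where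
  inj := Subtype.val_injective
  exact := by rw [LinearMap.exact_iff, Submodule.range_subtype, F.exact_zero]
  surj := F.surj

theorem ε_comp_d (F : FiniteProjRes R M) : F.ε ∘ₗ F.d 0 = 0 :=
  LinearMap.range_le_ker_iff.1 F.exact_zero.le

/-- Exactness of the complex `Hom(F, Y)` at the term `Hom(P (i + 1), Y)`. -/
def HomExactAt (F : FiniteProjRes R M) (Y : Type u) [AddCommGroup Y] [Module R Y] (i : ℕ) : Prop :=
  ∀ f : F.P (i + 1) →ₗ[R] Y, f ∘ₗ F.d (i + 1) = 0 → ∃ g : F.P i →ₗ[R] Y, g ∘ₗ F.d i = f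

theorem syzygyRes_homExactAt_iff (F : FiniteProjRes R M) (i : ℕ) :
    F.syzygyRes.HomExactAt Y i ↔ F.HomExactAt Y (i + 1) :=
  Iff.rfl

theorem subsingleton_ext_one_iff (F : FiniteProjRes R M) :
    Subsingleton (ExtMod R M Y 1) ↔ F.HomExactAt Y 0 := by
  constructor
  · intro hExt f hf
    have hf' : f ∘ₗ (LinearMap.range (F.d 1)).subtype = 0 := by
      ext ⟨_, x, rfl⟩
      exact LinearMap.congr_fun hf x
    obtain ⟨g, rfl⟩ := F.syzygyRes.isShortExact_ε.exists_comp_eq hf'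
    obtain ⟨ψ, rfl⟩ := F.isShortExact_ε.exists_extension_of_subsingleton_ext_one hExt g
    exact ⟨ψ, rfl⟩
  · intro hF
    refine F.isShortExact_ε.subsingleton_ext_one_of_exists_extension (fun φ => ?_)
      (ExtMod.subsingleton_of_projective 0)
    obtain ⟨g, hg⟩ := hF (φ ∘ₗ F.syzygyRes.ε) <|
      (congrArg φ.comp F.syzygyRes.ε_comp_d).trans (LinearMap.comp_zero φ)
    exact ⟨g, (LinearMap.cancel_right F.syzygyRes.surj).1 hg⟩

theorem subsingleton_ext_succ_iff (F : FiniteProjRes R M) (i : ℕ) :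
    Subsingleton (ExtMod R M Y (i + 1)) ↔ F.HomExactAt Y i := by
  induction i generalizing M with
  | zero => exact F.subsingleton_ext_one_iff
  | succ i ih =>
    rw [← F.syzygyRes_homExactAt_iff, ← ih F.syzygyRes]
    exact ⟨F.isShortExact_ε.subsingleton_ext_contra_left (ExtMod.subsingleton_of_projective _),
      fun h => F.isShortExact_ε.subsingleton_ext_contra_right h
        (ExtMod.subsingleton_of_projective _)⟩

end FiniteProjRes

theorem nonempty_finiteProjRes [IsNoetherianRing R] (M : Type u) [AddCommGroup M] [Module R M]
    [Module.Finite R M] : Nonempty (FiniteProjRes R M) := by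
  have exists_cover : ∀ N : Σ n : ℕ, Submodule R (Fin n → R),
      ∃ m : ℕ, ∃ f : (Fin m → R) →ₗ[R] (Fin N.1 → R), LinearMap.range f = N.2 := by
    intro N
    obtain ⟨m, g, hg⟩ := Module.Finite.exists_fin' R N.2
    exact ⟨m, N.2.subtype ∘ₗ g, by
      rw [LinearMap.range_comp, LinearMap.range_eq_top.2 hg, Submodule.map_subtype_top]⟩
  choose rank cover range_cover using exists_cover
  obtain ⟨n, ε, hε⟩ := Module.Finite.exists_fin' R M
  let syzygy : ℕ → Σ n : ℕ, Submodule R (Fin n → R) := fun i =>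
    Nat.rec ⟨n, LinearMap.ker ε⟩ (fun _ N => ⟨rank N, LinearMap.ker (cover N)⟩) i
  exact ⟨{
    P := fun i => Fin (syzygy i).1 → R
    d := fun i => cover (syzygy i)
    ε := ε
    surj := hε
    exact_zero := range_cover (syzygy 0)
    exact := fun i => range_cover (syzygy (i + 1)) }⟩

end

/-! ### Modules of G-dimension zero -/

noncomputable section

/-- `L` has G-dimension zero: `IsGDimZero` phrased through `ExtMod`. -/
structure IsTotallyReflexive (R : Type u) [CommRing R] (L : Type u) [AddCommGroup L]
    [Module R L] : Prop where
  finite : Module.Finite R L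
  bijective_eval : Function.Bijective (Module.Dual.eval R L)
  ext : ∀ i, Subsingleton (ExtMod R L R (i + 1))
  ext_dual : ∀ i, Subsingleton (ExtMod R (Module.Dual R L) R (i + 1))

variable {R : Type u} [CommRing R]
variable {L M A B C : Type u} [AddCommGroup L] [AddCommGroup M] [AddCommGroup A] [AddCommGroup B]
  [AddCommGroup C]
variable [Module R L] [Module R M] [Module R A] [Module R B] [Module R C]

theorem isTotallyReflexive_iff_isGDimZero : IsTotallyReflexive R L ↔ IsGDimZero R L := by
  constructor
  · intro h
    refine ⟨h.finite, h.bijective_eval, fun i hi => ?_, fun i hi => ?_⟩ <;>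
      obtain ⟨i, rfl⟩ := Nat.exists_eq_succ_of_ne_zero hi.ne'
    · exact (subsingleton_extM_iff _ _ _).2 (h.ext i)
    · exact (subsingleton_extM_iff _ _ _).2 (h.ext_dual i)
  · rintro ⟨hfin, heval, hext, hext_dual⟩
    exact ⟨hfin, heval, fun i => (subsingleton_extM_iff _ _ _).1 (hext _ i.succ_pos),
      fun i => (subsingleton_extM_iff _ _ _).1 (hext_dual _ i.succ_pos)⟩

namespace IsShortExact

variable {f : A →ₗ[R] B} {g : B →ₗ[R] C}

theorem dual (h : IsShortExact f g) (hf : Function.Surjective f.dualMap) :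
    IsShortExact g.dualMap f.dualMap where
  inj := LinearMap.dualMap_injective_of_surjective h.surj
  exact := LinearMap.exact_lcomp_of_exact_of_surjective R h.exact h.surj
  surj := hf

theorem surjective_dualMap (h : IsShortExact f g) (hC : Subsingleton (ExtMod R C R 1)) :
    Function.Surjective f.dualMap :=
  h.exists_extension_of_subsingleton_ext_one hC

theorem bijective_dual_eval_left (h : IsShortExact f g) (hf : Function.Surjective f.dualMap)
    (hB : Function.Bijective (Module.Dual.eval R B))
    (hC : Function.Injective (Module.Dual.eval R C)) :
    Function.Bijective (Module.Dual.eval R A) := by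
  constructor
  · refine Function.Injective.of_comp (f := f.dualMap.dualMap) ?_
    exact hB.1.comp h.inj
  · intro Φ
    obtain ⟨b, hb⟩ := hB.2 (f.dualMap.dualMap Φ)
    have hgb : g b = 0 := by
      refine hC (LinearMap.ext fun γ => (LinearMap.congr_fun hb (g.dualMap γ)).trans ?_)
      change Φ (f.dualMap (g.dualMap γ)) = _
      rw [(h.dual hf).exact.apply_apply_eq_zero, map_zero, map_zero, LinearMap.zero_apply]
    obtain ⟨a, rfl⟩ := (h.exact b).1 hgb
    refine ⟨a, LinearMap.ext fun φ => ?_⟩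
    obtain ⟨ψ, rfl⟩ := hf φ
    exact LinearMap.congr_fun hb ψ

theorem bijective_dual_eval_right (h : IsShortExact f g) (hf : Function.Surjective f.dualMap)
    (hA : Function.Surjective (Module.Dual.eval R A))
    (hB : Function.Bijective (Module.Dual.eval R B))
    (hext : Subsingleton (ExtMod R (Module.Dual R A) R 1)) :
    Function.Bijective (Module.Dual.eval R C) := by
  have hdual := h.dual hf
  constructor
  · rw [injective_iff_map_eq_zero]
    intro c hc
    obtain ⟨b, rfl⟩ := h.surj c
    obtain ⟨Φ, hΦ⟩ := hdual.exists_comp_eq (φ := Module.Dual.eval R B b) hc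
    obtain ⟨a, rfl⟩ := hA Φ
    obtain rfl : f a = b := hB.1 hΦ
    exact h.exact.apply_apply_eq_zero a
  · intro Γ
    obtain ⟨ψ, rfl⟩ := hdual.surjective_dualMap hext Γ
    obtain ⟨b, rfl⟩ := hB.2 ψ
    exact ⟨g b, rfl⟩

theorem bijective_dual_eval_mid (h : IsShortExact f g) (hf : Function.Surjective f.dualMap)
    (hA : Function.Bijective (Module.Dual.eval R A))
    (hC : Function.Bijective (Module.Dual.eval R C)) :
    Function.Bijective (Module.Dual.eval R B) := by
  have hdual := h.dual hf
  constructor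
  · rw [injective_iff_map_eq_zero]
    intro b hb
    have hgb : g b = 0 := hC.1 <| LinearMap.ext fun γ =>
      (LinearMap.congr_fun hb (g.dualMap γ)).trans (by rw [map_zero]; rfl)
    obtain ⟨a, rfl⟩ := (h.exact b).1 hgb
    have ha : a = 0 := hA.1 <| LinearMap.ext fun φ => by
      obtain ⟨ψ, rfl⟩ := hf φ
      exact (LinearMap.congr_fun hb ψ).trans (by rw [map_zero]; rfl)
    rw [ha, map_zero]
  · intro Φ
    obtain ⟨c, hc⟩ := hC.2 (g.dualMap.dualMap Φ)
    obtain ⟨b, rfl⟩ := h.surj c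
    have hΦ : (Φ - Module.Dual.eval R B b) ∘ₗ g.dualMap = 0 := by
      rw [LinearMap.sub_comp, sub_eq_zero]
      exact hc.symm
    obtain ⟨Ψ, hΨ⟩ := hdual.exists_comp_eq hΦ
    obtain ⟨a, rfl⟩ := hA.2 Ψ
    exact ⟨f a + b, (map_add _ _ _).trans (eq_sub_iff_add_eq.1 hΨ)⟩

end IsShortExact

namespace IsTotallyReflexive

theorem congr (e : L ≃ₗ[R] M) (h : IsTotallyReflexive R L) : IsTotallyReflexive R M where
  finite := have := h.finite; Module.Finite.equiv e
  bijective_eval := by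
    have : Module.IsReflexive R L := ⟨h.bijective_eval⟩
    have := Module.equiv e
    exact Module.bijective_dual_eval R M
  ext i := ExtMod.subsingleton_congr_left e (h.ext i)
  ext_dual i := ExtMod.subsingleton_congr_left e.symm.dualMap (h.ext_dual i)

theorem of_projective [Module.Projective R L] [Module.Finite R L] : IsTotallyReflexive R L where
  finite := inferInstance
  bijective_eval := Module.bijective_dual_eval R L
  ext i := ExtMod.subsingleton_of_projective i
  ext_dual i := ExtMod.subsingleton_of_projective i

variable {f : A →ₗ[R] B} {g : B →ₗ[R] C}

theorem left [IsNoetherianRing R] (h : IsShortExact f g) (hB : IsTotallyReflexive R B)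
    (hC : IsTotallyReflexive R C) : IsTotallyReflexive R A := by
  have hf := h.surjective_dualMap (hC.ext 0)
  have hdual := h.dual hf
  have := hB.finite
  refine ⟨Module.Finite.of_injective f h.inj,
    h.bijective_dual_eval_left hf hB.bijective_eval hC.bijective_eval.1,
    fun i => h.subsingleton_ext_contra_left (hB.ext i) (hC.ext (i + 1)), fun i => ?_⟩
  cases i with
  | zero =>
    refine hdual.subsingleton_ext_one_of_exists_extension (fun φ => ?_) (hB.ext_dual 0)
    obtain ⟨c, rfl⟩ := hC.bijective_eval.2 φ
    obtain ⟨b, rfl⟩ := h.surj c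
    exact ⟨Module.Dual.eval R B b, rfl⟩
  | succ i => exact hdual.subsingleton_ext_contra_right (hC.ext_dual i) (hB.ext_dual (i + 1))

theorem right (h : IsShortExact f g) (hA : IsTotallyReflexive R A) (hB : IsTotallyReflexive R B)
    (hf : Function.Surjective f.dualMap) : IsTotallyReflexive R C := by
  have hdual := h.dual hf
  have := hB.finite
  refine ⟨Module.Finite.of_surjective g h.surj,
    h.bijective_dual_eval_right hf hA.bijective_eval.2 hB.bijective_eval (hA.ext_dual 0),
    fun i => ?_,
    fun i => hdual.subsingleton_ext_contra_left (hB.ext_dual i) (hA.ext_dual (i + 1))⟩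
  cases i with
  | zero => exact h.subsingleton_ext_one_of_exists_extension hf (hB.ext 0)
  | succ i => exact h.subsingleton_ext_contra_right (hA.ext i) (hB.ext (i + 1))

theorem mid (h : IsShortExact f g) (hA : IsTotallyReflexive R A) (hC : IsTotallyReflexive R C) :
    IsTotallyReflexive R B := by
  have hf := h.surjective_dualMap (hC.ext 0)
  have := hA.finite
  have := hC.finite
  exact ⟨Module.Finite.of_exact h.exact h.surj,
    h.bijective_dual_eval_mid hf hA.bijective_eval hC.bijective_eval,
    fun i => h.subsingleton_ext_contra_mid (hA.ext i) (hC.ext i),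
    fun i => (h.dual hf).subsingleton_ext_contra_mid (hC.ext_dual i) (hA.ext_dual i)⟩

theorem exists_cosyzygy [IsNoetherianRing R] (h : IsTotallyReflexive R L) :
    ∃ m, ∃ ι : L →ₗ[R] (Fin m → R), Function.Injective ι ∧ Function.Surjective ι.dualMap ∧
      IsTotallyReflexive R ((Fin m → R) ⧸ LinearMap.range ι) := by
  have := h.finite
  obtain ⟨m, π, hπ⟩ := Module.Finite.exists_fin' R (Module.Dual R L)
  let ι : L →ₗ[R] (Fin m → R) := LinearMap.pi fun i => π (Pi.single i 1)
  have π_apply (v : Fin m → R) (l : L) : π v l = ∑ i, v i * ι l i := by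
    conv_lhs => rw [pi_eq_sum_univ' v]
    simp [ι]
  have hι : Function.Injective ι := by
    rw [injective_iff_map_eq_zero]
    intro l hl
    refine h.bijective_eval.1 (LinearMap.ext fun φ => ?_)
    obtain ⟨v, rfl⟩ := hπ φ
    simp [π_apply, hl]
  have hι' : Function.Surjective ι.dualMap := by
    intro φ
    obtain ⟨v, rfl⟩ := hπ φ
    exact ⟨∑ i, v i • LinearMap.proj i, by ext l; simp [π_apply]⟩
  exact ⟨m, ι, hι, hι', right (IsShortExact.of_injective hι) h of_projective hι'⟩

end IsTotallyReflexive

end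

/-! ### Finite G-dimension -/

noncomputable section

variable {R : Type u} [CommRing R]
variable {L M A B C : Type u} [AddCommGroup L] [AddCommGroup M] [AddCommGroup A] [AddCommGroup B]
  [AddCommGroup C]
variable [Module R L] [Module R M] [Module R A] [Module R B] [Module R C]
variable {f : A →ₗ[R] B} {g : B →ₗ[R] C} {n : ℕ}

theorem gdimLE_zero_iff : GDimLE R 0 (ModuleCat.of R M) ↔ IsTotallyReflexive R M :=
  isTotallyReflexive_iff_isGDimZero.symm

theorem gdimLE_succ_iff : GDimLE R (n + 1) (ModuleCat.of R M) ↔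
    ∃ (G : ModuleCat.{u} R) (f : ↥G →ₗ[R] M), IsTotallyReflexive R G ∧ Function.Surjective f ∧
      GDimLE R n (ModuleCat.of R (LinearMap.ker f)) := by
  simp only [isTotallyReflexive_iff_isGDimZero]
  rfl

theorem gdimLE_congr (e : L ≃ₗ[R] M) (h : GDimLE R n (ModuleCat.of R L)) :
    GDimLE R n (ModuleCat.of R M) := by
  cases n with
  | zero => exact gdimLE_zero_iff.2 ((gdimLE_zero_iff.1 h).congr e)
  | succ n =>
    obtain ⟨G, f, hG, hf, hker⟩ := gdimLE_succ_iff.1 h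
    refine gdimLE_succ_iff.2 ⟨G, e.toLinearMap ∘ₗ f, hG, e.surjective.comp hf, ?_⟩
    rwa [LinearEquiv.ker_comp]

namespace IsShortExact

/-- The first term of a short exact sequence is the kernel of the second map. -/
def kerEquiv (h : IsShortExact f g) : A ≃ₗ[R] LinearMap.ker g :=
  (LinearEquiv.ofInjective f h.inj).trans
    (LinearEquiv.ofEq _ _ (LinearMap.exact_iff.1 h.exact).symm)

theorem inl_snd : IsShortExact (LinearMap.inl R A B) (LinearMap.snd R A B) where
  inj := LinearMap.inl_injective
  exact := Function.Exact.inl_snd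
  surj := LinearMap.snd_surjective

theorem ker_restrict_ker {π : L →ₗ[R] B} (hπ : Function.Surjective π) (g : B →ₗ[R] C) :
    IsShortExact (Submodule.inclusion (LinearMap.ker_le_ker_comp π g))
      (π.restrict fun _ hx => hx : LinearMap.ker (g ∘ₗ π) →ₗ[R] LinearMap.ker g) where
  inj := Submodule.inclusion_injective _
  exact := by
    rintro ⟨x, hx⟩
    constructor
    · exact fun hπx => ⟨⟨x, congrArg Subtype.val hπx⟩, rfl⟩
    · rintro ⟨⟨y, hy⟩, hyx⟩
      obtain rfl : y = x := congrArg Subtype.val hyx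
      exact Subtype.ext hy
  surj := by
    rintro ⟨b, hb⟩
    obtain ⟨x, rfl⟩ := hπ b
    exact ⟨⟨x, hb⟩, rfl⟩

theorem prodMap_id (h : IsShortExact f g) :
    IsShortExact (LinearMap.inl R B L ∘ₗ f) (g.prodMap (LinearMap.id : L →ₗ[R] L)) where
  inj := LinearMap.inl_injective.comp h.inj
  exact := by
    rintro ⟨b, l⟩
    simp only [LinearMap.prodMap_apply, LinearMap.id_apply, Prod.mk_eq_zero, h.exact b,
      Set.mem_range, LinearMap.comp_apply, LinearMap.inl_apply, Prod.mk.injEq, exists_and_right,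
      eq_comm (a := l)]
  surj := h.surj.prodMap Function.surjective_id

theorem schanuel {π : L →ₗ[R] C} (h : IsShortExact f g) {s : B →ₗ[R] L}
    (hs : π ∘ₗ s = g) :
    ∃ i : A →ₗ[R] LinearMap.ker π × B,
      IsShortExact i (LinearMap.coprod (LinearMap.ker π).subtype s) := by
  have hs' (b : B) : π (s b) = g b := LinearMap.congr_fun hs b
  have hgf (a : A) : g (f a) = 0 := h.exact.apply_apply_eq_zero a
  refine ⟨LinearMap.prod (LinearMap.codRestrict _ (-(s ∘ₗ f)) fun a => by simp [hs', hgf]) f,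
    fun _ _ h' => h.inj (congrArg Prod.snd h'), ?_, fun l => ?_⟩
  · rintro ⟨⟨x, hx⟩, b⟩
    constructor
    · intro h0
      have h0 : x + s b = 0 := h0
      have hgb : g b = 0 := by rw [← hs', ← neg_eq_of_add_eq_zero_right h0, map_neg, hx, neg_zero]
      obtain ⟨a, rfl⟩ := (h.exact b).1 hgb
      exact ⟨a, Prod.ext (Subtype.ext (eq_neg_of_add_eq_zero_left h0).symm) rfl⟩
    · rintro ⟨a, ha⟩
      obtain ⟨rfl, rfl⟩ : -s (f a) = x ∧ f a = b :=
        ⟨congrArg (fun z => z.1.1) ha, congrArg Prod.snd ha⟩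
      exact neg_add_cancel _
  · obtain ⟨b, hb⟩ := h.surj (π l)
    exact ⟨⟨⟨l - s b, by simp [hs', hb]⟩, b⟩, by simp⟩

end IsShortExact

theorem gdimLE_succ_of_isShortExact (h : IsShortExact f g) (hB : IsTotallyReflexive R B)
    (hA : GDimLE R n (ModuleCat.of R A)) : GDimLE R (n + 1) (ModuleCat.of R C) :=
  gdimLE_succ_iff.2 ⟨ModuleCat.of R B, g, hB, h.surj, gdimLE_congr h.kerEquiv hA⟩

theorem gdimLE_prod (hA : GDimLE R n (ModuleCat.of R A)) (hB : IsTotallyReflexive R B) :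
    GDimLE R n (ModuleCat.of R (A × B)) := by
  cases n with
  | zero => exact gdimLE_zero_iff.2 (.mid .inl_snd (gdimLE_zero_iff.1 hA) hB)
  | succ n =>
    obtain ⟨G, π, hG, hπ, hker⟩ := gdimLE_succ_iff.1 hA
    exact gdimLE_succ_of_isShortExact (IsShortExact.of_ker hπ).prodMap_id (.mid .inl_snd hG hB)
      hker

theorem gdimLE_left [IsNoetherianRing R] (h : IsShortExact f g)
    (hB : GDimLE R n (ModuleCat.of R B)) (hC : IsTotallyReflexive R C) :
    GDimLE R n (ModuleCat.of R A) := by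
  refine gdimLE_congr h.kerEquiv.symm ?_
  cases n with
  | zero => exact gdimLE_zero_iff.2 (.left (.of_ker h.surj) (gdimLE_zero_iff.1 hB) hC)
  | succ n =>
    obtain ⟨G, π, hG, hπ, hker⟩ := gdimLE_succ_iff.1 hB
    exact gdimLE_succ_of_isShortExact (.ker_restrict_ker hπ g)
      (.left (.of_ker (h.surj.comp hπ)) hG hC) hker

theorem gdimLE_syzygy [IsNoetherianRing R] [Module.Projective R B] [Module.Finite R B]
    (h : IsShortExact f g) (hC : GDimLE R (n + 1) (ModuleCat.of R C)) :
    GDimLE R n (ModuleCat.of R A) := by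
  obtain ⟨G, π, hG, hπ, hker⟩ := gdimLE_succ_iff.1 hC
  obtain ⟨s, hs⟩ := Module.projective_lifting_property π g hπ
  obtain ⟨i, hi⟩ := h.schanuel hs
  exact gdimLE_left hi (gdimLE_prod hker .of_projective) hG

namespace FiniteProjRes

theorem isTotallyReflexive_range_of_gdimLE [IsNoetherianRing R] (F : FiniteProjRes R M)
    (h : GDimLE R n (ModuleCat.of R M)) :
    IsTotallyReflexive R (LinearMap.range (F.d n)) := by
  induction n generalizing M with
  | zero => exact .left F.isShortExact_ε .of_projective (gdimLE_zero_iff.1 h)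
  | succ n ih => exact ih F.syzygyRes (gdimLE_syzygy F.isShortExact_ε h)

theorem homExactAt_of_isTotallyReflexive_range (F : FiniteProjRes R M)
    (h : IsTotallyReflexive R (LinearMap.range (F.d n))) {i : ℕ} (hi : n < i) :
    F.HomExactAt R i := by
  obtain ⟨i, rfl⟩ := Nat.exists_eq_succ_of_ne_zero (Nat.ne_zero_of_lt hi)
  induction n generalizing M i with
  | zero => exact (F.syzygyRes.subsingleton_ext_succ_iff i).1 (h.ext i)
  | succ n ih =>
    obtain ⟨i, rfl⟩ := Nat.exists_eq_succ_of_ne_zero (by lia : i ≠ 0)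
    exact ih F.syzygyRes h i (by lia)

theorem isTotallyReflexive_of_syzygy (F : FiniteProjRes R M)
    (h : IsTotallyReflexive R (LinearMap.range (F.d 0))) (hF : F.HomExactAt R 0) :
    IsTotallyReflexive R M :=
  .right F.isShortExact_ε h .of_projective
    (F.isShortExact_ε.surjective_dualMap (F.subsingleton_ext_one_iff.2 hF))

theorem isTotallyReflexive_of_homExactAt (F : FiniteProjRes R M)
    (h : IsTotallyReflexive R (LinearMap.range (F.d n))) (hF : ∀ i, F.HomExactAt R i) :
    IsTotallyReflexive R M := by
  induction n generalizing M with
  | zero => exact F.isTotallyReflexive_of_syzygy h (hF 0)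
  | succ n ih =>
    exact F.isTotallyReflexive_of_syzygy (ih F.syzygyRes h fun i => hF (i + 1)) (hF 0)

end FiniteProjRes

end

/-! ### The Auslander–Bridger formula -/

noncomputable section

open IsLocalRing

variable {R : Type u} [CommRing R]
variable {M L P X Y Y' A B C : Type u} [AddCommGroup M] [AddCommGroup L] [AddCommGroup P]
  [AddCommGroup X] [AddCommGroup Y] [AddCommGroup Y'] [AddCommGroup A] [AddCommGroup B]
  [AddCommGroup C]
variable [Module R M] [Module R L] [Module R P] [Module R X] [Module R Y] [Module R Y']
  [Module R A] [Module R B] [Module R C]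
variable {h i m : ℕ}

namespace ExtMod

theorem postcomp_sum (f : Fin m → Y →ₗ[R] Y') (e : ExtMod R X Y i) :
    postcomp (∑ k, f k) e = ∑ k, postcomp (f k) e :=
  map_sum (AddMonoidHom.mk' (fun f => postcomp f e) fun f g => postcomp_add f g e) f _

theorem eq_zero_of_postcomp_proj (e : ExtMod R X (Fin m → R) i)
    (he : ∀ k, postcomp (LinearMap.proj k : (Fin m → R) →ₗ[R] R) e = 0) : e = 0 := by
  have sum_single_proj : ∑ k, LinearMap.single R (fun _ : Fin m => R) k ∘ₗ LinearMap.proj k =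
      LinearMap.id := by
    ext i j
    simp [Finset.sum_apply, Pi.single_apply]
  rw [← postcomp_id e, ← sum_single_proj, postcomp_sum]
  refine Finset.sum_eq_zero fun k _ => ?_
  rw [← postcomp_postcomp, he, map_zero]

theorem eq_zero_of_forall_dual [Module.Projective R P] [Module.Finite R P] (e : ExtMod R X P i)
    (he : ∀ φ : P →ₗ[R] R, postcomp φ e = 0) : e = 0 := by
  obtain ⟨n, π, s, -, -, hs⟩ := Module.Finite.exists_comp_eq_id_of_projective R P
  rw [← postcomp_id e, ← hs, ← postcomp_postcomp, eq_zero_of_postcomp_proj (postcomp s e),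
    map_zero]
  intro k
  rw [postcomp_postcomp, he]

theorem subsingleton_into_projective [Module.Projective R P] [Module.Finite R P]
    (hR : Subsingleton (ExtMod R X R i)) : Subsingleton (ExtMod R X P i) :=
  subsingleton_of_forall_eq 0 fun e => eq_zero_of_forall_dual e fun _ => hR.elim _ _

theorem exists_postcomp_eq_pi (g : Module.Dual R (Fin m → R) →ₗ[R] ExtMod R X R i) :
    ∃ w : ExtMod R X (Fin m → R) i, ∀ φ : Module.Dual R (Fin m → R), postcomp φ w = g φ := by
  refine ⟨∑ k, postcomp (LinearMap.single R (fun _ => R) k) (g (LinearMap.proj k)), fun φ => ?_⟩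
  have φ_eq_sum : φ = ∑ k, φ (Pi.single k 1) • LinearMap.proj k := by
    ext k
    simp [Pi.single_apply]
  conv_rhs => rw [φ_eq_sum]
  rw [map_sum, map_sum]
  refine Finset.sum_congr rfl fun k _ => ?_
  have φ_comp_single : φ ∘ₗ LinearMap.single R (fun _ => R) k =
      φ (Pi.single k 1) • LinearMap.id := by
    ext
    simp
  rw [postcomp_postcomp, φ_comp_single, postcomp_smul, postcomp_id, map_smul]

theorem smul_eq_zero_of_mem {I : Ideal R} (e : ExtMod R (R ⧸ I) Y i) {r : R} (hr : r ∈ I) :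
    r • e = 0 := by
  have smul_id : (r • LinearMap.id : (R ⧸ I) →ₗ[R] (R ⧸ I)) = 0 := by
    ext
    change Ideal.Quotient.mk I (r * 1) = 0
    rwa [mul_one, Ideal.Quotient.eq_zero_iff_mem]
  rw [← precomp_id e, ← precomp_smul, smul_id, precomp_zero]

theorem exists_injective_quotient {I : Ideal R} [I.IsMaximal]
    (hE : ¬ Subsingleton (ExtMod R (R ⧸ I) Y i)) :
    ∃ u : (R ⧸ I) →ₗ[R] ExtMod R (R ⧸ I) Y i, Function.Injective u := by
  have : Nontrivial (ExtMod R (R ⧸ I) Y i) := not_subsingleton_iff_nontrivial.1 hE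
  obtain ⟨e, he⟩ := exists_ne (0 : ExtMod R (R ⧸ I) Y i)
  have : IsSimpleModule R (R ⧸ I) := isSimpleModule_iff_isCoatom.2 Ideal.IsMaximal.out
  let u : (R ⧸ I) →ₗ[R] ExtMod R (R ⧸ I) Y i :=
    Submodule.liftQ _ (LinearMap.toSpanSingleton R _ e) fun r hr => smul_eq_zero_of_mem e hr
  refine ⟨u, u.injective_or_eq_zero.resolve_right fun hu => he ?_⟩
  calc e = u (Submodule.Quotient.mk 1) := (one_smul R e).symm
    _ = 0 := by rw [hu, LinearMap.zero_apply]

end ExtMod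

theorem IsShortExact.eq_zero_of_postcomp_eq_zero_of_subsingleton {f : A →ₗ[R] B} {g : B →ₗ[R] C}
    (hfg : IsShortExact f g) (hC : ∀ t < h, Subsingleton (ExtMod R X C t)) {z : ExtMod R X A h}
    (hz : ExtMod.postcomp f z = 0) : z = 0 := by
  cases h with
  | zero => exact hfg.eq_zero_of_postcomp_eq_zero z hz
  | succ h =>
    obtain ⟨w, rfl⟩ := hfg.exists_connecting_eq z hz
    have := hC h h.lt_succ_self
    rw [Subsingleton.elim w 0, map_zero]

theorem exists_linearMap_residue_ne_zero [IsLocalRing R] (N : Type u) [AddCommGroup N]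
    [Module R N] [Module.Finite R N] [Nontrivial N] :
    ∃ φ : N →ₗ[R] (R ⧸ maximalIdeal R), φ ≠ 0 := by
  obtain ⟨K, hK, -⟩ := (eq_top_or_exists_le_coatom (⊥ : Submodule R N)).resolve_left bot_ne_top
  have : IsSimpleModule R (N ⧸ K) := isSimpleModule_iff_isCoatom.2 hK
  obtain ⟨I, hI, ⟨e⟩⟩ := isSimpleModule_iff_quot_maximal.1 this
  obtain rfl := IsLocalRing.eq_maximalIdeal hI
  refine ⟨e.toLinearMap ∘ₗ K.mkQ, fun h0 => hK.1 (eq_top_iff.2 fun x _ => ?_)⟩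
  simpa using LinearMap.congr_fun h0 x

variable [IsNoetherianRing R]

namespace IsTotallyReflexive

theorem subsingleton_ext (hL : IsTotallyReflexive R L)
    (hR : ∀ t < h, Subsingleton (ExtMod R X R t)) {t : ℕ} (ht : t < h) :
    Subsingleton (ExtMod R X L t) := by
  induction t generalizing L with
  | zero =>
    obtain ⟨m, ι, hι, -, -⟩ := hL.exists_cosyzygy
    exact (IsShortExact.of_injective hι).subsingleton_ext_left_zero
      (ExtMod.subsingleton_into_projective (hR 0 ht))
  | succ t ih =>
    obtain ⟨m, ι, hι, -, hC⟩ := hL.exists_cosyzygy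
    exact (IsShortExact.of_injective hι).subsingleton_ext_left (ih hC (by lia))
      (ExtMod.subsingleton_into_projective (hR _ ht))

theorem exists_postcomp_eq (hL : IsTotallyReflexive R L)
    (hR : ∀ t < h, Subsingleton (ExtMod R X R t)) (g : Module.Dual R L →ₗ[R] ExtMod R X R h) :
    ∃ z : ExtMod R X L h, ∀ φ : Module.Dual R L, ExtMod.postcomp φ z = g φ := by
  obtain ⟨m, ι, hι, hι', hC⟩ := hL.exists_cosyzygy
  obtain ⟨m', j, hj, -, hC'⟩ := hC.exists_cosyzygy
  have hιq := IsShortExact.of_injective hι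
  obtain ⟨w, hw⟩ := ExtMod.exists_postcomp_eq_pi (g ∘ₗ ι.dualMap)
  have hqw : ExtMod.postcomp (LinearMap.range ι).mkQ w = 0 := by
    refine (IsShortExact.of_injective hj).eq_zero_of_postcomp_eq_zero_of_subsingleton
      (fun t ht => hC'.subsingleton_ext hR ht) (ExtMod.eq_zero_of_postcomp_proj _ fun k => ?_)
    rw [ExtMod.postcomp_postcomp, ExtMod.postcomp_postcomp, hw, LinearMap.comp_apply,
      LinearMap.dualMap_apply', LinearMap.comp_assoc, LinearMap.comp_assoc,
      hιq.exact.linearMap_comp_eq_zero, LinearMap.comp_zero, LinearMap.comp_zero, map_zero]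
  obtain ⟨z, hz⟩ := hιq.exists_postcomp_eq w hqw
  refine ⟨z, fun φ => ?_⟩
  obtain ⟨ψ, rfl⟩ := hι' φ
  rw [LinearMap.dualMap_apply', ← ExtMod.postcomp_postcomp, hz, hw]
  rfl

theorem exists_ne_zero_postcomp_eq_zero [IsLocalRing R] [Module.Projective R P]
    [Module.Finite R P] (hL : IsTotallyReflexive R L)
    (hlt : ∀ t < h, Subsingleton (ExtMod R (R ⧸ maximalIdeal R) R t))
    (hne : ¬ Subsingleton (ExtMod R (R ⧸ maximalIdeal R) R h)) {i : L →ₗ[R] P}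
    (hi : ¬ Function.Surjective i.dualMap) :
    ∃ z : ExtMod R (R ⧸ maximalIdeal R) L h, z ≠ 0 ∧ ExtMod.postcomp i z = 0 := by
  have := hL.finite
  have : Nontrivial (Module.Dual R L ⧸ LinearMap.range i.dualMap) :=
    Submodule.Quotient.nontrivial_iff.2 (LinearMap.range_eq_top.not.2 hi)
  obtain ⟨φ, hφ⟩ :=
    exists_linearMap_residue_ne_zero (R := R) (Module.Dual R L ⧸ LinearMap.range i.dualMap)
  obtain ⟨u, hu⟩ := ExtMod.exists_injective_quotient hne
  obtain ⟨z, hz⟩ := hL.exists_postcomp_eq hlt (u ∘ₗ φ ∘ₗ (LinearMap.range i.dualMap).mkQ)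
  refine ⟨z, ?_, ExtMod.eq_zero_of_forall_dual _ fun ψ => ?_⟩
  · rintro rfl
    refine hφ (Submodule.linearMap_qext _ (LinearMap.ext fun f => hu ?_))
    simpa using (hz f).symm
  · have hψ : (LinearMap.range i.dualMap).mkQ (ψ ∘ₗ i) = 0 :=
      (Submodule.Quotient.mk_eq_zero _).2 ⟨ψ, rfl⟩
    rw [ExtMod.postcomp_postcomp, hz, LinearMap.comp_apply, LinearMap.comp_apply, hψ, map_zero,
      map_zero]

end IsTotallyReflexive

namespace FiniteProjRes

theorem isTotallyReflexive_range_succ (F : FiniteProjRes R M) {n : ℕ}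
    (hn : IsTotallyReflexive R (LinearMap.range (F.d n))) :
    IsTotallyReflexive R (LinearMap.range (F.d (n + 1))) := by
  have hker : IsTotallyReflexive R (LinearMap.ker (F.d n).rangeRestrict) :=
    .left (.of_ker (F.d n).surjective_rangeRestrict) .of_projective hn
  exact hker.congr (LinearEquiv.ofEq _ _ (by rw [LinearMap.ker_rangeRestrict, F.exact n]))

variable [IsLocalRing R]

theorem subsingleton_residue_ext (F : FiniteProjRes R M)
    (hR : ∀ t < h, Subsingleton (ExtMod R (R ⧸ maximalIdeal R) R t)) {n j : ℕ}
    (hn : IsTotallyReflexive R (LinearMap.range (F.d n))) (hj : ∀ i ≥ j, F.HomExactAt R i)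
    {t : ℕ} (ht : t + j < h) : Subsingleton (ExtMod R (R ⧸ maximalIdeal R) M t) := by
  induction j generalizing M t with
  | zero =>
    exact (F.isTotallyReflexive_of_homExactAt hn fun i => hj i i.zero_le).subsingleton_ext hR ht
  | succ j ih =>
    refine F.isShortExact_ε.subsingleton_ext_right
      (ExtMod.subsingleton_into_projective (hR t (by lia))) ?_
    exact ih F.syzygyRes (F.isTotallyReflexive_range_succ hn) (fun i hi => hj (i + 1) (by lia))
      (by lia)

theorem exists_not_subsingleton_residue_ext (F : FiniteProjRes R M)
    (hlt : ∀ t < h, Subsingleton (ExtMod R (R ⧸ maximalIdeal R) R t))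
    (hne : ¬ Subsingleton (ExtMod R (R ⧸ maximalIdeal R) R h)) {n j : ℕ}
    (hn : IsTotallyReflexive R (LinearMap.range (F.d n))) (hgt : ∀ i > j, F.HomExactAt R i)
    (hj : ¬ F.HomExactAt R j) :
    ∃ t, t + j + 1 = h ∧ ¬ Subsingleton (ExtMod R (R ⧸ maximalIdeal R) M t) := by
  have hn' : IsTotallyReflexive R (LinearMap.range (F.syzygyRes.d n)) :=
    F.isTotallyReflexive_range_succ hn
  induction j generalizing M with
  | zero =>
    have hsyz := F.syzygyRes.isTotallyReflexive_of_homExactAt hn' fun i => hgt (i + 1) (by lia)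
    obtain ⟨z, hz, hz0⟩ := hsyz.exists_ne_zero_postcomp_eq_zero hlt hne
      (i := (LinearMap.range (F.d 0)).subtype) fun hsurj =>
        hj (F.subsingleton_ext_one_iff.1
          (F.isShortExact_ε.subsingleton_ext_one_of_exists_extension hsurj
            (ExtMod.subsingleton_of_projective 0)))
    cases h with
    | zero => exact absurd (F.isShortExact_ε.eq_zero_of_postcomp_eq_zero z hz0) hz
    | succ h =>
      obtain ⟨w, rfl⟩ := F.isShortExact_ε.exists_connecting_eq z hz0
      exact ⟨h, rfl, fun hM => hz (by rw [hM.elim w 0, map_zero])⟩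
  | succ j ih =>
    obtain ⟨t, ht, hsyz⟩ := ih F.syzygyRes hn' (fun i hi => hgt (i + 1) (by lia)) hj
      (F.syzygyRes.isTotallyReflexive_range_succ hn')
    have hP := ExtMod.subsingleton_into_projective (P := F.P 0) (hlt t (by lia))
    cases t with
    | zero => exact absurd (F.isShortExact_ε.subsingleton_ext_left_zero hP) hsyz
    | succ t =>
      exact ⟨t, by lia, fun hM => hsyz (F.isShortExact_ε.subsingleton_ext_left hM hP)⟩

end FiniteProjRes

end

/-! ### Localization -/

noncomputable section

open IsLocalizedModule

variable {R : Type u} [CommRing R] (S : Submonoid R)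
variable {X X' Y Y' M M' : Type u} [AddCommGroup X] [AddCommGroup X'] [AddCommGroup Y]
  [AddCommGroup Y'] [AddCommGroup M] [AddCommGroup M']
variable [Module R X] [Module R X'] [Module R Y] [Module R Y'] [Module R M] [Module R M']
variable [Module (Localization S) X'] [Module (Localization S) Y'] [Module (Localization S) M']
  [IsScalarTower R (Localization S) X'] [IsScalarTower R (Localization S) Y']
  [IsScalarTower R (Localization S) M']
variable (gX : X →ₗ[R] X') (gY : Y →ₗ[R] Y') (g : M →ₗ[R] M')
variable [IsLocalizedModule S gX] [IsLocalizedModule S gY] [IsLocalizedModule S g]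

theorem range_mapExtendScalars_eq_ker {f : M →ₗ[R] X} {h : X →ₗ[R] Y}
    (exact : LinearMap.range f = LinearMap.ker h) :
    LinearMap.range (mapExtendScalars S g gX (Localization S) f) =
      LinearMap.ker (mapExtendScalars S gX gY (Localization S) h) :=
  calc
    _ = (LinearMap.range f).localized' (Localization S) S gX :=
      (LinearMap.localized'_range_eq_range_localizedMap _ S g gX f).symm
    _ = (LinearMap.ker h).localized' (Localization S) S gX := by rw [exact]
    _ = _ := LinearMap.localized'_ker_eq_ker_localizedMap _ S gX gY h

/-- The localization of a resolution of `M`, as a resolution of any localized module of `M`. -/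
def FiniteProjRes.localize (F : FiniteProjRes R M) : FiniteProjRes (Localization S) M' where
  P i := LocalizedModule S (F.P i)
  projective i := Module.projective_of_isLocalizedModule S (LocalizedModule.mkLinearMap S (F.P i))
  finite i := Module.Finite.of_isLocalizedModule S (LocalizedModule.mkLinearMap S (F.P i))
  d i := mapExtendScalars S (LocalizedModule.mkLinearMap S (F.P (i + 1)))
    (LocalizedModule.mkLinearMap S (F.P i)) (Localization S) (F.d i)
  ε := mapExtendScalars S (LocalizedModule.mkLinearMap S (F.P 0)) g (Localization S) F.ε
  surj := map_surjective S _ _ F.ε F.surj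
  exact_zero := range_mapExtendScalars_eq_ker S _ _ _ F.exact_zero
  exact i := range_mapExtendScalars_eq_ker S _ _ _ (F.exact i)

/-- The localization map `M* → (S⁻¹M)*`. -/
abbrev localizedDual : Module.Dual R M →ₗ[R] Module.Dual (Localization S) M' :=
  mapExtendScalars S g (Algebra.linearMap R (Localization S)) (Localization S)

theorem localizedDual_apply (φ : Module.Dual R M) (x : M) :
    localizedDual S g φ (g x) = algebraMap R (Localization S) (φ x) :=
  map_apply S g (Algebra.linearMap R (Localization S)) φ x

theorem localizedDual_comp (f : M →ₗ[R] X) (φ : Module.Dual R X) :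
    localizedDual S g (φ ∘ₗ f) =
      localizedDual S gX φ ∘ₗ mapExtendScalars S g gX (Localization S) f := by
  refine LinearMap.restrictScalars_injective R (IsLocalizedModule.linearMap_ext S g
    (Algebra.linearMap R (Localization S)) ?_)
  ext x
  simp [mapExtendScalars]

variable [IsNoetherianRing R]

instance isLocalizedModule_localizedDual [Module.Finite R M] :
    IsLocalizedModule S (localizedDual S g) :=
  have := Module.finitePresentation_of_finite R M
  inferInstance

theorem localizedDual_exact_iff [Module.Finite R X] [Module.Finite R Y] [Module.Finite R M]
    (f : M →ₗ[R] X) (h : X →ₗ[R] Y) :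
    (∀ φ : Module.Dual (Localization S) X', φ ∘ₗ mapExtendScalars S g gX (Localization S) f = 0 →
        ∃ ψ : Module.Dual (Localization S) Y',
          ψ ∘ₗ mapExtendScalars S gX gY (Localization S) h = φ) ↔
      ∀ φ : Module.Dual R X, φ ∘ₗ f = 0 → ∃ s : S, ∃ ψ : Module.Dual R Y, ψ ∘ₗ h = s • φ := by
  constructor
  · intro exact φ hφ
    obtain ⟨ψ', hψ'⟩ := exact (localizedDual S gX φ) (by rw [← localizedDual_comp, hφ, map_zero])
    obtain ⟨⟨ψ, s⟩, hs : s • ψ' = localizedDual S gY ψ⟩ :=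
      IsLocalizedModule.surj S (localizedDual S gY) ψ'
    have dual_eq : localizedDual S gX (ψ ∘ₗ h) = localizedDual S gX (s • φ) := by
      rw [localizedDual_comp S gY gX, ← hs, LinearMap.map_smul_of_tower, ← hψ']
      rfl
    obtain ⟨t, ht⟩ := exists_of_eq (S := S) dual_eq
    exact ⟨t * s, t • ψ, by rw [mul_smul, ← ht]; rfl⟩
  · intro exact φ' hφ'
    obtain ⟨⟨φ, s⟩, hs : s • φ' = localizedDual S gX φ⟩ :=
      IsLocalizedModule.surj S (localizedDual S gX) φ'
    have dual_eq_zero : localizedDual S g (φ ∘ₗ f) = 0 := by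
      rw [localizedDual_comp S gX g, ← hs]
      exact (congrArg (s • ·) hφ').trans (smul_zero s)
    obtain ⟨t, ht⟩ := (IsLocalizedModule.eq_zero_iff S (localizedDual S g)).1 dual_eq_zero
    obtain ⟨v, ψ, hv⟩ := exact (t • φ) ht
    refine ⟨mk' (localizedDual S gY) ψ (v * t * s),
      IsLocalizedModule.smul_injective (localizedDual S gX) (v * t * s) ?_⟩
    calc (v * t * s) • mk' (localizedDual S gY) ψ (v * t * s) ∘ₗ _
        = ((v * t * s) • mk' (localizedDual S gY) ψ (v * t * s)) ∘ₗ
            mapExtendScalars S gX gY (Localization S) h := rfl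
      _ = v • t • localizedDual S gX φ := by
        rw [mk'_cancel', ← localizedDual_comp, hv, LinearMap.map_smul_of_tower,
          LinearMap.map_smul_of_tower]
      _ = (v * t * s) • φ' := by rw [← hs, mul_smul, mul_smul]

theorem FiniteProjRes.localize_homExactAt_iff (F : FiniteProjRes R M) (i : ℕ) :
    (F.localize S g).HomExactAt (Localization S) i ↔
      ∀ f : Module.Dual R (F.P (i + 1)), f ∘ₗ F.d (i + 1) = 0 →
        ∃ s : S, ∃ h : Module.Dual R (F.P i), h ∘ₗ F.d i = s • f :=
  localizedDual_exact_iff S (LocalizedModule.mkLinearMap S (F.P (i + 1)))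
    (LocalizedModule.mkLinearMap S (F.P i)) (LocalizedModule.mkLinearMap S (F.P (i + 2)))
    (F.d (i + 1)) (F.d i)

theorem subsingleton_ext_localization (g : M →ₗ[R] M') [IsLocalizedModule S g]
    [Module.Finite R M] {i : ℕ}
    (hM : Subsingleton (ExtMod R M R (i + 1))) :
    Subsingleton (ExtMod (Localization S) M' (Localization S) (i + 1)) := by
  obtain ⟨F⟩ := nonempty_finiteProjRes (R := R) M
  rw [(F.localize S g).subsingleton_ext_succ_iff, F.localize_homExactAt_iff S g]
  intro f hf
  obtain ⟨h, hh⟩ := (F.subsingleton_ext_succ_iff i).1 hM f hf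
  exact ⟨1, h, by rw [hh, one_smul]⟩

theorem IsTotallyReflexive.localization (g : M →ₗ[R] M') [IsLocalizedModule S g]
    (h : IsTotallyReflexive R M) :
    IsTotallyReflexive (Localization S) M' := by
  have := h.finite
  have eval_eq_map : (Module.Dual.eval (Localization S) M').restrictScalars R =
      map S g (localizedDual S (localizedDual S g)) (Module.Dual.eval R M) := by
    refine IsLocalizedModule.linearMap_ext S g (localizedDual S (localizedDual S g)) ?_
    ext x : 1
    refine LinearMap.restrictScalars_injective R (IsLocalizedModule.linearMap_ext S
      (localizedDual S g) (Algebra.linearMap R (Localization S)) ?_)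
    ext φ
    calc localizedDual S g φ (g x) = algebraMap R (Localization S) (φ x) :=
          localizedDual_apply S g φ x
      _ = localizedDual S (localizedDual S g) (Module.Dual.eval R M x) (localizedDual S g φ) :=
          (localizedDual_apply S (localizedDual S g) (Module.Dual.eval R M x) φ).symm
      _ = _ := by rw [← map_apply S g]; rfl
  refine ⟨Module.Finite.of_isLocalizedModule S g, ?_,
    fun i => subsingleton_ext_localization S g (h.ext i),
    fun i => subsingleton_ext_localization S (localizedDual S g) (h.ext_dual i)⟩
  change Function.Bijective ((Module.Dual.eval (Localization S) M').restrictScalars R)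
  rw [eval_eq_map]
  exact ⟨map_injective S _ _ _ h.bijective_eval.1, map_surjective S _ _ _ h.bijective_eval.2⟩

theorem isTotallyReflexive_range_mapExtendScalars {f : M →ₗ[R] X}
    (h : IsTotallyReflexive R (LinearMap.range f)) : IsTotallyReflexive (Localization S)
      (LinearMap.range (mapExtendScalars S g gX (Localization S) f)) :=
  (h.localization S (Submodule.toLocalized' (Localization S) S gX _)).congr
    (LinearEquiv.ofEq _ _ (LinearMap.localized'_range_eq_range_localizedMap _ S g gX f))

theorem FiniteProjRes.isTotallyReflexive_range_localize (F : FiniteProjRes R M) {n : ℕ}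
    (h : IsTotallyReflexive R (LinearMap.range (F.d n))) :
    IsTotallyReflexive (Localization S) (LinearMap.range ((F.localize S g).d n)) :=
  isTotallyReflexive_range_mapExtendScalars S (LocalizedModule.mkLinearMap S (F.P n))
    (LocalizedModule.mkLinearMap S (F.P (n + 1))) h

end

/-! ### Regular sequences in Cohen–Macaulay local rings -/

noncomputable section

open IsLocalRing Pointwise

variable {R : Type u} [CommRing R]
variable {N X : Type u} [AddCommGroup N] [AddCommGroup X] [Module R N] [Module R X]
variable {d r : ℕ} {I J : Ideal R}

theorem le_height_iff_forall_isPrime {n : ℕ∞} :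
    n ≤ I.height ↔ ∀ p : Ideal R, p.IsPrime → I ≤ p → n ≤ p.height := by
  refine ⟨fun h p _ hIp => h.trans (Ideal.height_mono hIp), fun h => ?_⟩
  rw [Ideal.height_eq_inf_minimalPrimes]
  exact le_iInf₂ fun p hp => h p hp.1.1 hp.1.2

theorem IsShortExact.lsmul_mkQ {x : R} (hx : IsSMulRegular N x) :
    IsShortExact (LinearMap.lsmul R N x) ((x • (⊤ : Submodule R N)).mkQ) where
  inj := hx
  exact := LinearMap.exact_lsmul_mkQ_smul_top N x
  surj := Submodule.mkQ_surjective _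

theorem IsShortExact.lsmul_factor {x : R} (hx : IsSMulRegular (R ⧸ I) x) :
    IsShortExact (LinearMap.lsmul R (R ⧸ I) x)
      (Submodule.factor (le_sup_left : I ≤ I ⊔ Ideal.span {x})) where
  inj := hx
  exact := by
    intro y
    obtain ⟨y, rfl⟩ := Ideal.Quotient.mk_surjective y
    have factor_eq_zero_iff : Submodule.factor (le_sup_left : I ≤ I ⊔ Ideal.span {x})
        (Ideal.Quotient.mk I y) = 0 ↔ y ∈ I ⊔ Ideal.span {x} :=
      Submodule.Quotient.mk_eq_zero _
    have mem_range_iff : Ideal.Quotient.mk I y ∈ Set.range (LinearMap.lsmul R (R ⧸ I) x) ↔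
        ∃ c, x * c - y ∈ I := by
      simp only [Set.mem_range, Ideal.Quotient.mk_surjective.exists, ← Ideal.Quotient.eq]
      rfl
    rw [factor_eq_zero_iff, mem_range_iff, sup_comm, Ideal.mem_span_singleton_sup]
    constructor
    · rintro ⟨c, b, hb, rfl⟩
      exact ⟨c, by simpa [mul_comm x c] using I.neg_mem hb⟩
    · rintro ⟨c, hc⟩
      exact ⟨c, -(x * c - y), I.neg_mem hc, by ring⟩
  surj := Submodule.factor_surjective _

theorem exists_isSMulRegular_or_le_associatedPrime (N : Type u) [AddCommGroup N] [Module R N]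
    [IsNoetherianRing R] [Module.Finite R N] [Nontrivial N] (J : Ideal R) :
    (∃ x ∈ J, IsSMulRegular N x) ∨ ∃ p ∈ associatedPrimes R N, J ≤ p := by
  by_contra! ⟨not_regular, not_le⟩
  obtain ⟨q, -⟩ := associatedPrimes.nonempty R N
  have subset_union : (J : Set R) ⊆ ⋃ p ∈ associatedPrimes R N, p := by
    rw [biUnion_associatedPrimes_eq_compl_regular R N]
    exact not_regular
  obtain ⟨p, hp, hJp⟩ := (Ideal.subset_union_prime_finite (associatedPrimes.finite R N) q q
    fun _ hp _ _ => IsAssociatedPrime.isPrime hp).1 subset_union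
  exact not_le p hp hJp

theorem exists_isSMulRegular_of_subsingleton_ext [IsNoetherianRing R] [Module.Finite R N]
    (h : Subsingleton (ExtMod R (R ⧸ J) N 0)) : ∃ x ∈ J, IsSMulRegular N x := by
  have subsingleton_hom : Subsingleton ((R ⧸ J) →ₗ[R] N) :=
    subsingleton_of_forall_eq 0 fun f => (ExtMod.ofHom_eq_zero_iff f).1 (h.elim _ _)
  simpa only [Ideal.annihilator_quotient] using
    IsSMulRegular.subsingleton_linearMap_iff.1 subsingleton_hom

variable [IsLocalRing R]

theorem height_add_coheight_le (p : PrimeSpectrum R) :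
    p.asIdeal.height + Order.coheight p ≤ (maximalIdeal R).height := by
  have height_eq := maximalIdeal_height_eq_ringKrullDim (R := R)
  rw [ringKrullDim, Order.krullDim_eq_iSup_height_add_coheight_of_nonempty,
    WithBot.coe_inj] at height_eq
  rw [height_eq, PrimeSpectrum.height_eq_orderHeight]
  exact le_iSup (fun a : PrimeSpectrum R => Order.height a + Order.coheight a) p

/-- The ideal `I` is generated by an `R`-regular sequence of length `r` in the maximal ideal. -/
inductive IsRegularSeqIdeal : ℕ → Ideal R → Prop
  | zero : IsRegularSeqIdeal 0 ⊥
  | succ (r : ℕ) (I : Ideal R) (x : R) (h : IsRegularSeqIdeal r I) (hx : x ∈ maximalIdeal R)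
    (hreg : IsSMulRegular (R ⧸ I) x) : IsRegularSeqIdeal (r + 1) (I ⊔ Ideal.span {x})

namespace IsRegularSeqIdeal

theorem le_maximalIdeal (h : IsRegularSeqIdeal r I) : I ≤ maximalIdeal R := by
  induction h with
  | zero => exact bot_le
  | succ _ I x _ hx _ ih => exact sup_le ih ((Ideal.span_singleton_le_iff_mem _).2 hx)

theorem le_height (h : IsRegularSeqIdeal r I) : (r : ℕ∞) ≤ I.height := by
  induction h with
  | zero => simp
  | succ r I x _ _ hreg ih =>
    refine le_height_iff_forall_isPrime.2 fun p _ hp => ?_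
    obtain ⟨q, hq, hqp⟩ := Ideal.exists_minimalPrimes_le (le_sup_left.trans hp)
    have : q.IsPrime := hq.1.1
    have x_notMem : x ∉ q := hreg.notMem_of_mem_minimalPrimes
      (by rwa [Ideal.annihilator_quotient])
    have x_mem : x ∈ p := hp (Ideal.mem_sup_right (Ideal.mem_span_singleton_self x))
    calc ((r + 1 : ℕ) : ℕ∞) = (r : ℕ∞) + 1 := by push_cast; rfl
      _ ≤ q.height + 1 := by gcongr; exact ih.trans (Ideal.height_mono hq.1.2)
      _ ≤ p.height := Ideal.height_add_one_le_of_lt_of_isPrime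
        (lt_of_le_of_ne hqp fun h => x_notMem (h ▸ x_mem))

theorem subsingleton_ext (h : IsRegularSeqIdeal r I) (hX : ∀ i < d, Subsingleton (ExtMod R X R i))
    {i : ℕ} (hi : i + r < d) : Subsingleton (ExtMod R X (R ⧸ I) i) := by
  induction h generalizing i with
  | zero =>
    exact ExtMod.subsingleton_congr_right (Submodule.quotEquivOfEqBot ⊥ rfl).symm (hX i hi)
  | succ r I x _ _ hreg ih =>
    exact (IsShortExact.lsmul_factor hreg).subsingleton_ext_right (ih (by lia)) (ih (by lia))

end IsRegularSeqIdeal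

variable (R) in
/-- `R` is Cohen–Macaulay of dimension `d`, with the depth expressed through the vanishing of
`Ext` from the residue field. -/
structure IsCMOfDim (d : ℕ) : Prop where
  ext : ∀ i < d, Subsingleton (ExtMod R (R ⧸ maximalIdeal R) R i)
  dim : (maximalIdeal R).height = d

theorem IsCMOfDim.length_le (hR : IsCMOfDim R d) (h : IsRegularSeqIdeal r I) : r ≤ d := by
  have le_dim := h.le_height.trans (Ideal.height_mono h.le_maximalIdeal)
  rw [hR.dim] at le_dim
  exact_mod_cast le_dim

theorem IsCMOfDim.le_height_of_lt (hR : IsCMOfDim R d) (hJ : (r : ℕ∞) ≤ J.height) (hdr : d < r)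
    (n : ℕ∞) : n ≤ J.height := by
  have htop : J = ⊤ := by
    by_contra hne
    have hle := hJ.trans (Ideal.height_mono (IsLocalRing.le_maximalIdeal hne))
    rw [hR.dim] at hle
    exact hdr.not_ge (by exact_mod_cast hle)
  rw [htop, Ideal.height_top]
  exact le_top

variable [IsNoetherianRing R]

theorem exists_associatedPrime_quotSMulTop_gt [Module.Finite R N] {x : R} (hxm : x ∈ maximalIdeal R)
    (hx : IsSMulRegular N x) {p : Ideal R} (hp : p ∈ associatedPrimes R N) :
    ∃ q ∈ associatedPrimes R (QuotSMulTop x N), p < q := by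
  obtain ⟨hpp, n₀, hn₀⟩ := isAssociatedPrime_iff.1 hp
  have mem_iff (a : R) : a ∈ p ↔ a • n₀ = 0 := by
    rw [hn₀, Submodule.mem_colon_singleton, Submodule.mem_bot]
  have n₀_ne_zero : n₀ ≠ 0 := by
    rintro rfl
    exact hpp.ne_top ((Ideal.eq_top_iff_one _).2 ((mem_iff 1).2 (smul_zero _)))
  have x_notMem : x ∉ p := fun hxp =>
    n₀_ne_zero (hx.right_eq_zero_of_smul ((mem_iff x).1 hxp))
  let K : Submodule R N := Submodule.torsionBySet R N p
  have mem_K_iff (n : N) : n ∈ K ↔ ∀ a ∈ p, a • n = 0 := by simp [K]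
  have not_le : ¬ K ≤ x • ⊤ := by
    intro hle
    have K_le : K ≤ maximalIdeal R • K := by
      intro n hn
      obtain ⟨n', -, rfl⟩ := hle hn
      refine Submodule.smul_mem_smul hxm ((mem_K_iff n').2 fun a ha => ?_)
      refine hx.right_eq_zero_of_smul ?_
      rw [smul_comm]
      exact (mem_K_iff _).1 hn a ha
    have K_eq_bot : K = ⊥ := Submodule.eq_bot_of_le_smul_of_le_jacobson_bot _ _
      (IsNoetherian.noetherian K) K_le (maximalIdeal_le_jacobson _)
    exact n₀_ne_zero (K_eq_bot.le ((mem_K_iff n₀).2 fun a ha => (mem_iff a).1 ha))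
  obtain ⟨n, hnK, hnx⟩ := SetLike.not_le_iff_exists.1 not_le
  obtain ⟨q, hq, hqle⟩ := exists_le_isAssociatedPrime_of_isNoetherianRing (R := R)
    (Submodule.Quotient.mk n : QuotSMulTop x N) ((Submodule.Quotient.mk_eq_zero _).not.2 hnx)
  have mem_q {a : R} (ha : a • n ∈ x • (⊤ : Submodule R N)) : a ∈ q := by
    refine hqle ?_
    rw [Submodule.mem_colon_singleton, Submodule.mem_bot]
    exact (Submodule.Quotient.mk_eq_zero _).2 ha
  have p_le_q : p ≤ q := fun a ha => mem_q (by simp [(mem_K_iff n).1 hnK a ha])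
  have x_mem_q : x ∈ q := mem_q ⟨n, trivial, rfl⟩
  exact ⟨q, hq, lt_of_le_of_ne p_le_q fun h => x_notMem (h ▸ x_mem_q)⟩

theorem le_coheight_of_mem_associatedPrimes [Module.Finite R N] {s : ℕ}
    (h : ∀ i < s, Subsingleton (ExtMod R (R ⧸ maximalIdeal R) N i)) {p : PrimeSpectrum R}
    (hp : p.asIdeal ∈ associatedPrimes R N) : (s : ℕ∞) ≤ Order.coheight p := by
  induction s generalizing N p with
  | zero => simp
  | succ s ih =>
    obtain ⟨x, hxm, hx⟩ := exists_isSMulRegular_of_subsingleton_ext (h 0 s.succ_pos)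
    obtain ⟨q, hq, hpq⟩ := exists_associatedPrime_quotSMulTop_gt hxm hx hp
    have le_coheight_q : (s : ℕ∞) ≤ Order.coheight (⟨q, hq.isPrime⟩ : PrimeSpectrum R) :=
      ih (N := QuotSMulTop x N) (fun i hi => (IsShortExact.lsmul_mkQ hx).subsingleton_ext_right
        (h i (by lia)) (h (i + 1) (by lia))) hq
    calc ((s + 1 : ℕ) : ℕ∞) = (s : ℕ∞) + 1 := by push_cast; rfl
      _ ≤ Order.coheight (⟨q, hq.isPrime⟩ : PrimeSpectrum R) + 1 := by gcongr
      _ ≤ Order.coheight p := Order.coheight_add_one_le hpq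

theorem IsRegularSeqIdeal.exists_pow_le (h : IsRegularSeqIdeal d I)
    (hd : (maximalIdeal R).height = d) : ∃ n, maximalIdeal R ^ n ≤ I := by
  have le_radical : maximalIdeal R ≤ I.radical := by
    rw [Ideal.radical_eq_sInf]
    refine le_sInf fun p ⟨hIp, hp⟩ => ?_
    have := hp
    exact (Ideal.eq_of_le_of_height_le p (IsLocalRing.le_maximalIdeal hp.ne_top)
      (hd.le.trans (h.le_height.trans (Ideal.height_mono hIp)))).ge
  exact Ideal.exists_pow_le_of_le_radical_of_fg le_radical (IsNoetherian.noetherian _)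

namespace IsCMOfDim

theorem height_le_of_mem_associatedPrimes (hR : IsCMOfDim R d) (h : IsRegularSeqIdeal r I)
    {p : Ideal R} (hp : p ∈ associatedPrimes R (R ⧸ I)) : p.height ≤ r := by
  have le_coheight : ((d - r : ℕ) : ℕ∞) ≤ Order.coheight (⟨p, hp.isPrime⟩ : PrimeSpectrum R) :=
    le_coheight_of_mem_associatedPrimes (fun i hi => h.subsingleton_ext hR.ext (by lia)) hp
  have add_le : p.height + (d - r : ℕ) ≤ (d : ℕ∞) :=
    calc p.height + (d - r : ℕ)
        ≤ p.height + Order.coheight (⟨p, hp.isPrime⟩ : PrimeSpectrum R) := by gcongr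
      _ ≤ (maximalIdeal R).height := height_add_coheight_le ⟨p, hp.isPrime⟩
      _ = d := hR.dim
  have height_ne_top : p.height ≠ ⊤ := fun h => by simp [h] at add_le
  lift p.height to ℕ using height_ne_top with a
  norm_cast at add_le ⊢
  linarith [Nat.sub_add_cancel (hR.length_le h)]

theorem exists_isSMulRegular (hR : IsCMOfDim R d) (h : IsRegularSeqIdeal r I)
    (hJ : ((r + 1 : ℕ) : ℕ∞) ≤ J.height) : ∃ x ∈ J, IsSMulRegular (R ⧸ I) x := by
  have : Nontrivial (R ⧸ I) := Ideal.Quotient.nontrivial_iff.2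
    (ne_top_of_le_ne_top (maximalIdeal.isMaximal R).ne_top h.le_maximalIdeal)
  refine (exists_isSMulRegular_or_le_associatedPrime (R ⧸ I) J).resolve_right ?_
  rintro ⟨p, hp, hJp⟩
  have succ_le : ((r + 1 : ℕ) : ℕ∞) ≤ r :=
    hJ.trans ((Ideal.height_mono hJp).trans (hR.height_le_of_mem_associatedPrimes h hp))
  norm_cast at succ_le
  lia

theorem exists_isRegularSeqIdeal_le (hR : IsCMOfDim R d) (hJm : J ≤ maximalIdeal R)
    (hJ : (r : ℕ∞) ≤ J.height) : ∃ I ≤ J, IsRegularSeqIdeal r I := by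
  induction r with
  | zero => exact ⟨⊥, bot_le, .zero⟩
  | succ r ih =>
    obtain ⟨I, hIJ, hI⟩ := ih (le_trans (by norm_cast; lia) hJ)
    obtain ⟨x, hx, hreg⟩ := hR.exists_isSMulRegular hI hJ
    exact ⟨_, sup_le hIJ ((Ideal.span_singleton_le_iff_mem _).2 hx),
      .succ r I x hI (hJm hx) hreg⟩

theorem subsingleton_ext_quotient_pow (hR : IsCMOfDim R d) (n : ℕ) :
    ∀ i < d, Subsingleton (ExtMod R (R ⧸ maximalIdeal R ^ n) R i) := by
  have smul_top_lt : maximalIdeal R • (⊤ : Submodule R R) < ⊤ := by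
    rw [smul_eq_mul, Ideal.mul_top, lt_top_iff_ne_top]
    exact (maximalIdeal.isMaximal R).ne_top
  have support_residue : Module.support R (R ⧸ maximalIdeal R) =
      PrimeSpectrum.zeroLocus (maximalIdeal R) := by
    rw [Module.support_eq_zeroLocus, Ideal.annihilator_quotient]
  have support_quotient_pow : Module.support R (R ⧸ maximalIdeal R ^ n) ⊆
      PrimeSpectrum.zeroLocus (maximalIdeal R) := by
    rw [Module.support_eq_zeroLocus, Ideal.annihilator_quotient,
      PrimeSpectrum.zeroLocus_subset_zeroLocus_iff]
    exact fun x hx => ⟨n, Ideal.pow_mem_pow hx n⟩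
  obtain ⟨rs, rfl, hm, hreg⟩ := ModuleCat.exists_isRegular_of_exists_subsingleton_ext
    (maximalIdeal R) d (ModuleCat.of R R) smul_top_lt (ModuleCat.of R (R ⧸ maximalIdeal R))
    support_residue hR.ext
  exact ModuleCat.subsingleton_ext_of_exists_isRegular (maximalIdeal R)
    (ModuleCat.of R (R ⧸ maximalIdeal R ^ n)) support_quotient_pow (ModuleCat.of R R) smul_top_lt
    rs hm hreg

theorem not_subsingleton_ext (hR : IsCMOfDim R d) :
    ¬ Subsingleton (ExtMod R (R ⧸ maximalIdeal R) R d) := by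
  intro h
  obtain ⟨I, -, hI⟩ := hR.exists_isRegularSeqIdeal_le le_rfl hR.dim.ge
  have hom_eq_zero : Subsingleton (ExtMod R (R ⧸ maximalIdeal R) (R ⧸ I) 0) := by
    refine hI.subsingleton_ext (d := d + 1) (fun i hi => ?_) (by lia)
    rcases Nat.lt_succ_iff_lt_or_eq.1 hi with hi | rfl
    exacts [hR.ext i hi, h]
  obtain ⟨x, hx, hreg⟩ := exists_isSMulRegular_of_subsingleton_ext hom_eq_zero
  exact absurd (hR.length_le (hI.succ d I x hx hreg)) (by lia)

end IsCMOfDim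

end

/-! ### Serre's condition for torsionless modules of finite G-dimension -/

noncomputable section

open IsLocalRing

variable {R : Type u} [CommRing R]
variable {M : Type u} [AddCommGroup M] [Module R M]
variable {h m : ℕ}

theorem isSMulRegular_quotient_map (S : Submonoid R) {I : Ideal R} {x : R}
    (hx : IsSMulRegular (R ⧸ I) x) :
    IsSMulRegular (Localization S ⧸ I.map (algebraMap R (Localization S)))
      (algebraMap R (Localization S) x) := by
  rw [← Ideal.localized'_eq_map (Localization S) S I]
  exact hx.of_isLocalizedModule (Localization S) S
    (Submodule.toLocalizedQuotient' (Localization S) S (Algebra.linearMap R (Localization S)) I)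

theorem exists_injective_localizedModule_pi (S : Submonoid R) {f : M →ₗ[R] (Fin m → R)}
    (hf : Function.Injective f) :
    ∃ f' : LocalizedModule S M →ₗ[Localization S] (Fin m → Localization S),
      Function.Injective f' := by
  let toPi : (Fin m → R) →ₗ[R] (Fin m → Localization S) :=
    LinearMap.pi fun i => Algebra.linearMap R (Localization S) ∘ₗ LinearMap.proj i
  have : IsLocalizedModule S toPi :=
    IsLocalizedModule.pi S fun _ : Fin m => Algebra.linearMap R (Localization S)
  exact ⟨IsLocalizedModule.mapExtendScalars S (LocalizedModule.mkLinearMap S M) toPi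
    (Localization S) f, IsLocalizedModule.map_injective S _ _ f hf⟩

section Local

variable [IsLocalRing R]

theorem le_edepth_iff {c : ℕ} : (c : ℕ∞) ≤ edepth R (maximalIdeal R) M ↔
    ∀ t < c, Subsingleton (ExtMod R (R ⧸ maximalIdeal R) M t) := by
  rw [edepth, le_sInf_iff]
  constructor
  · intro hc t ht
    by_contra hns
    have c_le_t : (c : ℕ∞) ≤ t := hc t ⟨t, rfl, fun hs => hns ((subsingleton_extM_iff t _ _).1 hs)⟩
    exact absurd (Nat.cast_le.1 c_le_t) ht.not_ge
  · rintro hc _ ⟨t, rfl, ht⟩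
    refine Nat.cast_le.2 (le_of_not_gt fun htc => ?_)
    exact ht ((subsingleton_extM_iff t _ _).2 (hc t htc))

namespace IsRegularSeqIdeal

theorem map_localization {p : Ideal R} [p.IsPrime] {r : ℕ} {I : Ideal R}
    (h : IsRegularSeqIdeal r I) (hI : I ≤ p) :
    IsRegularSeqIdeal r (I.map (algebraMap R (Localization.AtPrime p))) := by
  induction h with
  | zero => rw [Ideal.map_bot]; exact .zero
  | succ r I x _ _ hreg ih =>
    have x_mem : x ∈ p := hI (Ideal.mem_sup_right (Ideal.mem_span_singleton_self x))
    rw [Ideal.map_sup, Ideal.map_span, Set.image_singleton]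
    refine .succ r _ _ (ih (le_sup_left.trans hI)) ?_ (isSMulRegular_quotient_map _ hreg)
    rw [← Localization.AtPrime.map_eq_maximalIdeal]
    exact Ideal.mem_map_of_mem _ x_mem

theorem subsingleton_residue_ext_of_quotient {r : ℕ} {I : Ideal R} (h : IsRegularSeqIdeal r I)
    {s : ℕ} (hs : ∀ i < s, Subsingleton (ExtMod R (R ⧸ maximalIdeal R) (R ⧸ I) i)) :
    ∀ i < r + s, Subsingleton (ExtMod R (R ⧸ maximalIdeal R) R i) := by
  induction h generalizing s with
  | zero =>
    exact fun i hi => ExtMod.subsingleton_congr_right (Submodule.quotEquivOfEqBot ⊥ rfl)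
      (hs i (by lia))
  | succ r I x _ hx hreg ih =>
    refine fun i hi => ih (s := s + 1) (fun j hj => ?_) i (by lia)
    have hS := IsShortExact.lsmul_factor hreg
    have postcomp_lsmul (e : ExtMod R (R ⧸ maximalIdeal R) (R ⧸ I) j) :
        ExtMod.postcomp (LinearMap.lsmul R (R ⧸ I) x) e = 0 := by
      have lsmul_eq : LinearMap.lsmul R (R ⧸ I) x = x • LinearMap.id := by ext; simp
      rw [lsmul_eq, ExtMod.postcomp_smul, ExtMod.postcomp_id]
      exact ExtMod.smul_eq_zero_of_mem e hx
    refine subsingleton_of_forall_eq 0 fun e => ?_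
    cases j with
    | zero => exact hS.eq_zero_of_postcomp_eq_zero e (postcomp_lsmul e)
    | succ j =>
      obtain ⟨y, rfl⟩ := hS.exists_connecting_eq e (postcomp_lsmul e)
      rw [(hs j (by lia)).elim y 0, map_zero]

end IsRegularSeqIdeal

end Local

namespace IsCMOfDim

variable [IsNoetherianRing R] [IsLocalRing R] {d : ℕ}

theorem localization (hR : IsCMOfDim R d) {p : Ideal R} [p.IsPrime] (hp : p.height = h) :
    IsCMOfDim (Localization.AtPrime p) h where
  ext := by
    obtain ⟨I, hIp, hI⟩ := hR.exists_isRegularSeqIdeal_le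
      (IsLocalRing.le_maximalIdeal (Ideal.IsPrime.ne_top ‹_›)) hp.ge
    exact (hI.map_localization hIp).subsingleton_residue_ext_of_quotient (s := 0) (by simp)
  dim := by
    have height_eq := maximalIdeal_height_eq_ringKrullDim (R := Localization.AtPrime p)
    rw [IsLocalization.AtPrime.ringKrullDim_eq_height p, hp] at height_eq
    exact_mod_cast height_eq

variable {f : M →ₗ[R] (Fin m → R)}

theorem ringKrullDim_quotient_annihilator (hR : IsCMOfDim R h) [Nontrivial M]
    (hf : Function.Injective f) :
    ringKrullDim (R ⧸ Module.annihilator R M) = ((h : ℕ∞) : WithBot ℕ∞) := by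
  apply le_antisymm
  · refine (ringKrullDim_quotient_le _).trans ?_
    rw [← maximalIdeal_height_eq_ringKrullDim, hR.dim]
  · obtain ⟨p, hp⟩ := associatedPrimes.nonempty R M
    have le_coheight : (h : ℕ∞) ≤ Order.coheight (⟨p, hp.isPrime⟩ : PrimeSpectrum R) :=
      le_coheight_of_mem_associatedPrimes
        (fun i hi => ExtMod.subsingleton_into_projective (hR.ext i hi)) (hp.map_of_injective f hf)
    have annihilator_le : Module.annihilator R M ≤ p := by
      rw [← Submodule.annihilator_top]
      exact hp.annihilator_le
    have coheight_le : (Order.coheight (⟨p, hp.isPrime⟩ : PrimeSpectrum R) : WithBot ℕ∞) ≤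
        Order.krullDim (PrimeSpectrum.zeroLocus (R := R) (Module.annihilator R M)) := by
      rw [Order.coheight_eq_krullDim_Ici]
      exact Order.krullDim_le_of_strictMono (fun a => ⟨a.1, annihilator_le.trans a.2⟩)
        fun _ _ hab => hab
    rw [ringKrullDim_quotient]
    exact le_trans (by exact_mod_cast le_coheight) coheight_le

theorem min_locDim_le_locDepth_iff (hR : IsCMOfDim R d) (hf : Function.Injective f) {p : Ideal R}
    [p.IsPrime] (hp : p.height = h) (k : ℕ) :
    min (k : WithBot ℕ∞) (locDim R p M) ≤ (locDepth R p M : WithBot ℕ∞) ↔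
      ∀ t < min k h, Subsingleton (ExtMod (Localization.AtPrime p)
        (Localization.AtPrime p ⧸ maximalIdeal (Localization.AtPrime p))
        (LocalizedModule p.primeCompl M) t) := by
  have : Module.Finite R M := .of_injective f hf
  have : Module.Finite (Localization.AtPrime p) (LocalizedModule p.primeCompl M) :=
    Module.Finite.of_isLocalizedModule p.primeCompl (LocalizedModule.mkLinearMap p.primeCompl M)
  rcases subsingleton_or_nontrivial (LocalizedModule p.primeCompl M) with hM | hM
  · have locDim_eq : locDim R p M = ⊥ := by
      rwa [locDim, ← Module.supportDim_eq_ringKrullDim_quotient_annihilator,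
        Module.supportDim_eq_bot_iff_subsingleton]
    simp only [locDim_eq, bot_le, inf_of_le_right, true_iff]
    refine fun t _ => subsingleton_of_forall_eq 0 fun e => ?_
    rw [← ExtMod.postcomp_id e, Subsingleton.elim LinearMap.id 0, ExtMod.postcomp_zero]
  · obtain ⟨f', hf'⟩ := exists_injective_localizedModule_pi p.primeCompl hf
    have locDim_eq : locDim R p M = ((h : ℕ∞) : WithBot ℕ∞) :=
      (hR.localization hp).ringKrullDim_quotient_annihilator hf'
    have min_eq : min (k : WithBot ℕ∞) ((h : ℕ∞) : WithBot ℕ∞) =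
        (((min k h : ℕ) : ℕ∞) : WithBot ℕ∞) := by
      push_cast
      rfl
    rw [locDim_eq, min_eq, WithBot.coe_le_coe, locDepth, le_edepth_iff]

theorem serreS_one (hR : IsCMOfDim R d) (hf : Function.Injective f) : SerreS R 1 M := by
  intro p hp
  obtain ⟨h, hh⟩ := ENat.ne_top_iff_exists.1 p.height_ne_top_of_isPrime
  refine (hR.min_locDim_le_locDepth_iff hf hh.symm 1).2 fun t ht => ?_
  obtain ⟨t_lt_one, t_lt_h⟩ := lt_min_iff.1 ht
  obtain rfl : t = 0 := by lia
  obtain ⟨f', hf'⟩ := exists_injective_localizedModule_pi p.primeCompl hf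
  exact (IsShortExact.of_injective hf').subsingleton_ext_left_zero
    (ExtMod.subsingleton_into_projective ((hR.localization hh.symm).ext 0 t_lt_h))

theorem subsingleton_residue_ext_iff (hR : IsCMOfDim R h) (F : FiniteProjRes R M) {n : ℕ}
    (hn : IsTotallyReflexive R (LinearMap.range (F.d n))) (k : ℕ) :
    (∀ t < min k h, Subsingleton (ExtMod R (R ⧸ maximalIdeal R) M t)) ↔
      ∀ i, ¬ F.HomExactAt R i → i + 1 + k ≤ h := by
  constructor
  · intro hM i hi
    have le_n {j : ℕ} (hj : ¬ F.HomExactAt R j) : j ≤ n :=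
      le_of_not_gt fun hlt => hj (F.homExactAt_of_isTotallyReflexive_range hn hlt)
    classical
    let j := Nat.findGreatest (fun j => ¬ F.HomExactAt R j) n
    have not_exact_j : ¬ F.HomExactAt R j :=
      Nat.findGreatest_spec (P := fun j => ¬ F.HomExactAt R j) (le_n hi) hi
    have exact_of_gt : ∀ l > j, F.HomExactAt R l := fun l hl =>
      by_contra fun hns => hl.not_ge (Nat.le_findGreatest (le_n hns) hns)
    have i_le_j : i ≤ j := Nat.le_findGreatest (le_n hi) hi
    obtain ⟨t, ht, hnt⟩ := F.exists_not_subsingleton_residue_ext hR.ext hR.not_subsingleton_ext hn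
      exact_of_gt not_exact_j
    have min_le_t : min k h ≤ t := le_of_not_gt fun hlt => hnt (hM t hlt)
    lia
  · intro hF t ht
    obtain ⟨t_lt_k, t_lt_h⟩ := lt_min_iff.1 ht
    refine F.subsingleton_residue_ext hR.ext hn (j := h - t - 1) (fun i hi => ?_) (by lia)
    by_contra hns
    exact absurd (hF i hns) (by lia)

theorem serreS_iff (hR : IsCMOfDim R d) (hf : Function.Injective f) (F : FiniteProjRes R M)
    {n : ℕ} (hn : IsTotallyReflexive R (LinearMap.range (F.d n))) (k : ℕ) :
    SerreS R k M ↔ ∀ (p : Ideal R) (_ : p.IsPrime) (i : ℕ),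
      ¬ (F.localize p.primeCompl (LocalizedModule.mkLinearMap p.primeCompl M)).HomExactAt
        (Localization p.primeCompl) i → ((i + 1 + k : ℕ) : ℕ∞) ≤ p.height := by
  refine forall₂_congr fun p hp => ?_
  obtain ⟨h, hh⟩ := ENat.ne_top_iff_exists.1 p.height_ne_top_of_isPrime
  let mk := LocalizedModule.mkLinearMap p.primeCompl M
  rw [hR.min_locDim_le_locDepth_iff hf hh.symm,
    (hR.localization hh.symm).subsingleton_residue_ext_iff (F.localize p.primeCompl mk)
      (F.isTotallyReflexive_range_localize p.primeCompl mk hn) k, ← hh]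
  norm_cast

end IsCMOfDim

end

/-! ### Grothendieck vanishing -/

noncomputable section

open IsLocalRing

variable {R : Type u} [CommRing R]
variable {A X N : Type u} [AddCommGroup A] [Module R A] [AddCommGroup X] [Module R X]
  [AddCommGroup N] [Module R N]
variable {I : Ideal R} {i k : ℕ}

theorem ExtMod.precomp_eq_zero_of_forall_mem {P : Submodule R X} {e : ExtMod R X N i}
    (he : ExtMod.precomp P.subtype e = 0) {φ : A →ₗ[R] X} (hφ : ∀ a, φ a ∈ P) :
    ExtMod.precomp φ e = 0 := by
  have hcomp := ExtMod.precomp_precomp (φ.codRestrict P hφ) P.subtype e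
  rw [he, map_zero] at hcomp
  exact hcomp.symm

theorem exists_comap_pow_smul_top_le [IsNoetherianRing R] [Module.Finite R X] (I : Ideal R)
    (L : Submodule R X) (n : ℕ) :
    ∃ m, (I ^ m • (⊤ : Submodule R X)).comap L.subtype ≤ I ^ n • (⊤ : Submodule R L) := by
  obtain ⟨c, hc⟩ := Ideal.exists_pow_inf_eq_pow_smul I L
  refine ⟨c + n, fun x hx => ?_⟩
  have hmem : (x : X) ∈ I ^ (c + n) • ⊤ ⊓ L := ⟨hx, x.2⟩
  rw [hc _ (Nat.le_add_right c n), Nat.add_sub_cancel_left] at hmem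
  have hmap : (x : X) ∈ (I ^ n • (⊤ : Submodule R L)).map L.subtype := by
    rw [Submodule.map_smul'', Submodule.map_subtype_top]
    exact Submodule.smul_mono le_rfl inf_le_right hmem
  obtain ⟨y, hy, hyx⟩ := hmap
  rwa [← Subtype.ext (a1 := y) hyx]

theorem isShortExact_restrict_pow_smul_top {g : A →ₗ[R] X} (hg : Function.Surjective g)
    (J : Ideal R) :
    ∃ g' : (J • ⊤ : Submodule R A) →ₗ[R] (J • ⊤ : Submodule R X),
      IsShortExact (LinearMap.ker g').subtype g' ∧
        (J • (⊤ : Submodule R X)).subtype ∘ₗ g' = g ∘ₗ (J • (⊤ : Submodule R A)).subtype := by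
  have hmap : (J • (⊤ : Submodule R A)).map g = J • ⊤ := by
    rw [Submodule.map_smul'', Submodule.map_top, LinearMap.range_eq_top.2 hg]
  refine ⟨g.restrict fun x hx => hmap.le (Submodule.mem_map_of_mem hx), .of_ker ?_, rfl⟩
  rintro ⟨y, hy⟩
  obtain ⟨x, hx, rfl⟩ := hmap.ge hy
  exact ⟨⟨x, hx⟩, rfl⟩

theorem ExtMod.exists_precomp_pow_smul_top_eq_zero [IsNoetherianRing R]
    (hN : ∀ r ∈ I ^ k, ∀ x : N, r • x = 0) [Module.Finite R X] (e : ExtMod R X N i) :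
    ∃ n, ExtMod.precomp (I ^ n • (⊤ : Submodule R X)).subtype e = 0 := by
  induction i generalizing X with
  | zero =>
    obtain ⟨φ, rfl⟩ := ExtMod.ofHom_surjective e
    refine ⟨k, ?_⟩
    rw [ExtMod.precomp_ofHom, ExtMod.ofHom_eq_zero_iff]
    ext ⟨x, hx⟩
    suffices I ^ k • ⊤ ≤ LinearMap.ker φ from this hx
    exact Submodule.smul_le.2 fun r hr x _ => by rw [LinearMap.mem_ker, map_smul, hN r hr]
  | succ i ih =>
    obtain ⟨m, g, hg⟩ := Module.Finite.exists_fin' R X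
    have hs := IsShortExact.of_ker hg
    have := ExtMod.subsingleton_of_projective (R := R) (X := Fin m → R) (Y := N) i
    obtain ⟨e', rfl⟩ := hs.exists_contraConnecting_eq e (Subsingleton.elim _ _)
    obtain ⟨n₀, hn₀⟩ := ih e'
    obtain ⟨n, hn⟩ := exists_comap_pow_smul_top_le I (LinearMap.ker g) n₀
    obtain ⟨g', hs', hg'⟩ := isShortExact_restrict_pow_smul_top hg (I ^ n)
    let a : LinearMap.ker g' →ₗ[R] LinearMap.ker g :=
      ((I ^ n • ⊤ : Submodule R (Fin m → R)).subtype ∘ₗ (LinearMap.ker g').subtype).codRestrict _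
        fun x => (LinearMap.congr_fun hg' x.1).symm.trans (congrArg Subtype.val x.2)
    have ha : ExtMod.precomp (X' := LinearMap.ker g') a e' = 0 :=
      ExtMod.precomp_eq_zero_of_forall_mem (A := LinearMap.ker g') hn₀ fun x => hn x.1.2
    refine ⟨n, (hs'.precomp_contraConnecting hs (a := a) rfl hg' e').trans ?_⟩
    rw [ha, map_zero]

namespace LocalCoh

theorem subsingleton_succ_of_pow_smul_eq_zero [IsNoetherianRing R]
    (hN : ∀ r ∈ I ^ k, ∀ x : N, r • x = 0) (i : ℕ) : Subsingleton (LocalCoh I N (i + 1)) := by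
  rw [subsingleton_iff]
  intro n e
  have hs (n : ℕ) : IsShortExact (I ^ n).subtype (I ^ n).mkQ := .of_submodule (I ^ n)
  have := ExtMod.subsingleton_of_projective (R := R) (X := R) (Y := N) i
  obtain ⟨e', rfl⟩ := (hs n).exists_contraConnecting_eq e (Subsingleton.elim _ _)
  obtain ⟨n₀, hn₀⟩ := ExtMod.exists_precomp_pow_smul_top_eq_zero hN e'
  obtain ⟨m, hm⟩ := exists_comap_pow_smul_top_le I (I ^ n) n₀
  have hle : I ^ (n + m) ≤ I ^ n := Ideal.pow_le_pow_right (Nat.le_add_right n m)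
  have ha : ExtMod.precomp (Submodule.inclusion hle) e' = 0 :=
    ExtMod.precomp_eq_zero_of_forall_mem hn₀ fun x => hm <| by
      simpa using Ideal.pow_le_pow_right (Nat.le_add_left m n) x.2
  refine ⟨n + m, Nat.le_add_right n m, ?_⟩
  refine ((hs (n + m)).precomp_contraConnecting (hs n) (a := Submodule.inclusion hle)
    (b := LinearMap.id) rfl rfl e').trans ?_
  rw [ha, _root_.map_zero]

theorem exists_pow_smul_eq_zero (x : LocalCoh I N i) : ∃ n, ∀ r ∈ I ^ n, r • x = 0 := by
  obtain ⟨n, e, rfl⟩ := exists_of x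
  refine ⟨n, fun r hr => ?_⟩
  rw [← _root_.map_smul, ExtMod.smul_eq_zero_of_mem e hr, _root_.map_zero]

theorem subsingleton_succ_of_subsingleton_quotSMulTop {x : R} (hx : x ∈ I)
    (hreg : IsSMulRegular N x) (h : Subsingleton (LocalCoh I (QuotSMulTop x N) i)) :
    Subsingleton (LocalCoh I N (i + 1)) := by
  have hinj (e : LocalCoh I N (i + 1)) (he : x • e = 0) : e = 0 := by
    have hmap : map I (i + 1) (LinearMap.lsmul R N x) e = 0 := by
      rw [show LinearMap.lsmul R N x = x • LinearMap.id from rfl, map_smul, map_id, he]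
    obtain ⟨y, rfl⟩ := exists_connecting_eq (IsShortExact.lsmul_mkQ hreg) e hmap
    rw [h.elim y 0, _root_.map_zero]
  refine subsingleton_of_forall_eq 0 fun e => ?_
  obtain ⟨n, hn⟩ := exists_pow_smul_eq_zero e
  have hpow : x ^ n • e = 0 := hn _ (Ideal.pow_mem_pow hx n)
  clear hn
  induction n with
  | zero => simpa using hpow
  | succ n ih => exact ih (hinj _ (by rwa [← mul_smul, ← pow_succ']))

end LocalCoh

theorem pow_succ_smul_eq_zero_of_mem_sup_span {T : Submodule R N}
    (hT : ∀ r ∈ I ^ k, ∀ x ∈ T, r • x = 0) {y : N} (hy : ∀ r ∈ I, r • y ∈ T) :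
    ∀ r ∈ I ^ (k + 1), ∀ x ∈ T ⊔ Submodule.span R {y}, r • x = 0 := by
  have hann : I ^ (k + 1) • (T ⊔ Submodule.span R {y}) ≤ ⊥ := by
    rw [pow_succ, Submodule.mul_smul]
    have hle : I • (T ⊔ Submodule.span R {y}) ≤ T := by
      rw [Submodule.smul_sup, sup_le_iff]
      refine ⟨Submodule.smul_le_right, Submodule.smul_le.2 fun r hr z hz => ?_⟩
      obtain ⟨c, rfl⟩ := Submodule.mem_span_singleton.1 hz
      exact smul_comm r c y ▸ T.smul_mem c (hy r hr)
    exact (Submodule.smul_mono le_rfl hle).trans (Submodule.smul_le.2 hT)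
  exact Submodule.smul_le.1 hann

variable [IsNoetherianRing R] [IsLocalRing R]

theorem exists_pow_maximalIdeal_smul_eq_zero_isSMulRegular_quotient (N : Type u) [AddCommGroup N]
    [Module R N] [Module.Finite R N] :
    ∃ T : Submodule R N, (∃ k, ∀ r ∈ maximalIdeal R ^ k, ∀ x : T, r • x = 0) ∧
      ∃ x ∈ maximalIdeal R, IsSMulRegular (N ⧸ T) x := by
  obtain ⟨T, ⟨k, hk⟩, hmax⟩ := WellFounded.has_min (wellFounded_gt (α := Submodule R N))
    {T | ∃ k, ∀ r ∈ maximalIdeal R ^ k, ∀ x ∈ T, r • x = 0} ⟨⊥, 0, by simp⟩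
  refine ⟨T, ⟨k, fun r hr x => Subtype.ext (hk r hr x x.2)⟩,
    exists_isSMulRegular_of_subsingleton_ext (subsingleton_of_forall_eq 0 fun e => ?_)⟩
  obtain ⟨φ, rfl⟩ := ExtMod.ofHom_surjective e
  rw [ExtMod.ofHom_eq_zero_iff]
  obtain ⟨y, hy⟩ := T.mkQ_surjective (φ ((maximalIdeal R).mkQ 1))
  have hsmul : ∀ r ∈ maximalIdeal R, r • y ∈ T := fun r hr => by
    have hr0 : (maximalIdeal R).mkQ (r • 1) = 0 := by
      rw [smul_eq_mul, mul_one]; exact (Submodule.Quotient.mk_eq_zero _).2 hr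
    rw [← T.ker_mkQ, LinearMap.mem_ker, map_smul, hy, ← map_smul, ← map_smul, hr0, map_zero]
  have hyT : y ∈ T := by
    by_contra hyT
    refine hmax _ ⟨k + 1, pow_succ_smul_eq_zero_of_mem_sup_span hk hsmul⟩
      (left_lt_sup.2 fun h => hyT (h (Submodule.mem_span_singleton_self y)))
  ext
  exact hy.symm.trans ((Submodule.Quotient.mk_eq_zero T).2 hyT)

namespace LocalCoh

theorem subsingleton_of_supportDim_lt {s : ℕ} [Module.Finite R N]
    (h : Module.supportDim R N < s) (hi : s ≤ i) :
    Subsingleton (LocalCoh (maximalIdeal R) N i) := by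
  induction s generalizing N i with
  | zero =>
    have : Subsingleton N :=
      (Module.supportDim_eq_bot_iff_subsingleton R N).1 (WithBot.lt_coe_bot.1 h)
    exact subsingleton_of_subsingleton
  | succ s ih =>
    obtain ⟨i, rfl⟩ : ∃ j, i = j + 1 := ⟨i - 1, by lia⟩
    obtain ⟨T, ⟨k, hk⟩, x, hx, hreg⟩ :=
      exists_pow_maximalIdeal_smul_eq_zero_isSMulRegular_quotient (R := R) N
    refine subsingleton_mid (.of_submodule T) (subsingleton_succ_of_pow_smul_eq_zero hk i)
      (subsingleton_succ_of_subsingleton_quotSMulTop hx hreg (ih ?_ (by lia)))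
    have hquot : Module.supportDim R (QuotSMulTop x (N ⧸ T)) + 1 < s + 1 := by
      rw [Module.supportDim_quotSMulTop_succ_eq_supportDim hreg hx]
      exact (Module.supportDim_le_of_surjective T.mkQ T.mkQ_surjective).trans_lt (by simpa using h)
    exact lt_of_add_lt_add_right hquot

end LocalCoh

end

/-! ### Local cohomology and the codimension of the support -/

noncomputable section

open IsLocalRing

variable {R : Type u} [CommRing R]
variable {E E' : Type u} [AddCommGroup E] [Module R E] [AddCommGroup E'] [Module R E']
variable {I J : Ideal R} {a : R} {d i r s : ℕ}

namespace LocalCoh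

theorem subsingleton_of_forall_ext (h : ∀ n, Subsingleton (ExtMod R (R ⧸ I ^ n) E i)) :
    Subsingleton (LocalCoh I E i) := subsingleton_of_forall_eq 0 fun x => by
  obtain ⟨n, e, rfl⟩ := exists_of x
  rw [(h n).elim e 0, _root_.map_zero]

theorem map_sum {m : ℕ} (f : Fin m → E →ₗ[R] E') (x : LocalCoh I E i) :
    map I i (∑ j, f j) x = ∑ j, map I i (f j) x :=
  _root_.map_sum (AddMonoidHom.mk' (fun f => map I i f x) fun f g => map_add f g x) f _

theorem smul_eq_zero_of_mem_annihilator (ha : a ∈ Module.annihilator R E)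
    (x : LocalCoh I E i) : a • x = 0 := by
  have hid : a • (LinearMap.id : E →ₗ[R] E) = 0 := LinearMap.ext (Module.mem_annihilator.1 ha)
  rw [← map_id x, ← map_smul, hid, map_zero]

end LocalCoh

theorem mem_of_smul_localCoh_zero_eq_zero {n : ℕ} (hn : J ^ n ≤ I)
    (ha : ∀ x : LocalCoh J (R ⧸ I) 0, a • x = 0) : a ∈ I := by
  have hone := ha (.of J (R ⧸ I) 0 n (ExtMod.ofHom (Submodule.factor hn)))
  rw [← map_smul] at hone
  obtain ⟨m, hm, hzero⟩ := LocalCoh.exists_powTransition_eq_zero hone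
  rw [powTransition, map_smul, ExtMod.precomp_ofHom, ← ExtMod.postcomp_id (ExtMod.ofHom _),
    ← ExtMod.postcomp_smul, ExtMod.postcomp_ofHom, ExtMod.ofHom_eq_zero_iff] at hzero
  have hmk : I.mkQ (a • 1) = 0 := LinearMap.congr_fun hzero ((J ^ m).mkQ 1)
  rwa [smul_eq_mul, mul_one, ← LinearMap.mem_ker, Submodule.ker_mkQ] at hmk

variable [IsLocalRing R]

variable [IsNoetherianRing R]

theorem LocalCoh.subsingleton_of_height_lt [Module.Finite R E]
    (h : (maximalIdeal R).height < (Module.annihilator R E).height + i) :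
    Subsingleton (LocalCoh (maximalIdeal R) E i) := by
  refine subsingleton_of_supportDim_lt (not_le.1 fun hle => ?_) le_rfl
  obtain ⟨l, hl⟩ := Order.le_krullDim_iff.1 hle
  have hheight : (Module.annihilator R E).height ≤ l.head.1.asIdeal.height :=
    Ideal.height_mono (Module.annihilator_le_of_mem_support l.head.2)
  have hcoheight : (i : ℕ∞) ≤ Order.coheight l.head.1 :=
    hl ▸ Order.length_le_coheight (p := l.map Subtype.val fun _ _ h => h) le_rfl
  exact h.not_ge ((add_le_add hheight hcoheight).trans (height_add_coheight_le _))

theorem mem_of_forall_mem_sup_span_pow {y : R} (hy : y ∈ maximalIdeal R)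
    (ha : ∀ n, a ∈ I ⊔ Ideal.span {y ^ (n + 1)}) : a ∈ I := by
  have hmem : I.mkQ a ∈ (⨅ n, maximalIdeal R ^ n • ⊤ : Submodule R (R ⧸ I)) := by
    refine Submodule.mem_iInf _ |>.2 fun n => ?_
    obtain ⟨b, hb, c, hc, rfl⟩ := Submodule.mem_sup.1 (ha n)
    obtain ⟨c, rfl⟩ := Ideal.mem_span_singleton'.1 hc
    have hbI : I.mkQ b = 0 := (Submodule.Quotient.mk_eq_zero I).2 hb
    rw [map_add, hbI, zero_add, mul_comm, ← smul_eq_mul, map_smul]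
    exact Submodule.smul_mem_smul
      (Ideal.pow_le_pow_right n.le_succ (Ideal.pow_mem_pow hy (n + 1))) trivial
  rw [Ideal.iInf_pow_smul_eq_bot_of_isLocalRing _ (maximalIdeal.isMaximal R).ne_top] at hmem
  exact (Submodule.Quotient.mk_eq_zero I).1 hmem

namespace IsCMOfDim

theorem subsingleton_localCoh_of_projective (hR : IsCMOfDim R d) (Q : Type u) [AddCommGroup Q]
    [Module R Q] [Module.Finite R Q] [Module.Projective R Q] (hi : i < d) :
    Subsingleton (LocalCoh (maximalIdeal R) Q i) :=
  LocalCoh.subsingleton_of_forall_ext fun n =>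
    ExtMod.subsingleton_into_projective (hR.subsingleton_ext_quotient_pow n i hi)

theorem subsingleton_localCoh_quotient (hR : IsCMOfDim R d) (h : IsRegularSeqIdeal r I)
    (hi : i + r < d) : Subsingleton (LocalCoh (maximalIdeal R) (R ⧸ I) i) :=
  LocalCoh.subsingleton_of_forall_ext fun n =>
    h.subsingleton_ext (hR.subsingleton_ext_quotient_pow n) hi

theorem subsingleton_localCoh_of_le_height [Module.Finite R E] (hR : IsCMOfDim R d)
    (h : (r : ℕ∞) ≤ (Module.annihilator R E).height) (hi : d < r + i) :
    Subsingleton (LocalCoh (maximalIdeal R) E i) :=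
  LocalCoh.subsingleton_of_height_lt <| calc
    (maximalIdeal R).height = d := hR.dim
    _ < ((r + i : ℕ) : ℕ∞) := by exact_mod_cast hi
    _ = r + i := by push_cast; rfl
    _ ≤ (Module.annihilator R E).height + i := by gcongr

theorem mem_of_smul_localCoh_eq_zero (hR : IsCMOfDim R d) (h : IsRegularSeqIdeal r I)
    (hrs : r + s = d) (ha : ∀ x : LocalCoh (maximalIdeal R) (R ⧸ I) s, a • x = 0) : a ∈ I := by
  induction s generalizing r I with
  | zero =>
    obtain rfl : r = d := hrs
    obtain ⟨n, hn⟩ := h.exists_pow_le hR.dim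
    exact mem_of_smul_localCoh_zero_eq_zero hn ha
  | succ s ih =>
    obtain ⟨y, hy, hreg⟩ :=
      exists_isSMulRegular_of_subsingleton_ext (h.subsingleton_ext hR.ext (i := 0) (by lia))
    refine mem_of_forall_mem_sup_span_pow hy fun n => ?_
    have hregn := hreg.pow (n + 1)
    have hyn : y ^ (n + 1) ∈ maximalIdeal R := Ideal.pow_mem_of_mem _ hy _ n.succ_pos
    refine ih (.succ r I _ h hyn hregn) (by lia) fun x => ?_
    have hs := IsShortExact.lsmul_factor hregn
    have hconn : LocalCoh.connecting (maximalIdeal R) s hs (a • x) = 0 := by rw [map_smul, ha]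
    obtain ⟨z, hz⟩ := LocalCoh.exists_map_eq_of_connecting_eq_zero hs _ hconn
    rw [← hz, (hR.subsingleton_localCoh_quotient h (by lia)).elim z 0, map_zero]

theorem linearMap_quotient_eq_zero (hR : IsCMOfDim R d) (h : IsRegularSeqIdeal r I)
    (hrs : r + s = d) (hIE : I ≤ Module.annihilator R E)
    (hE : Subsingleton (LocalCoh (maximalIdeal R) E s)) (φ : E →ₗ[R] R ⧸ I) : φ = 0 := by
  ext e
  obtain ⟨a, ha⟩ := I.mkQ_surjective (φ e)
  rw [LinearMap.zero_apply, ← ha]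
  refine (Submodule.Quotient.mk_eq_zero I).2 (hR.mem_of_smul_localCoh_eq_zero h hrs fun x => ?_)
  let ψ : R ⧸ I →ₗ[R] E := I.liftQ (LinearMap.toSpanSingleton R E e) fun b hb =>
    Module.mem_annihilator.1 (hIE hb) e
  have hcomp : φ ∘ₗ ψ = a • LinearMap.id := by
    apply Submodule.linearMap_qext
    ext
    change φ ((1 : R) • e) = a • I.mkQ 1
    rw [one_smul, ← ha, ← map_smul, smul_eq_mul, mul_one]
  rw [← LocalCoh.map_id x, ← LocalCoh.map_smul, ← hcomp, ← LocalCoh.map_map,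
    hE.elim (LocalCoh.map _ _ ψ x) 0, map_zero]

theorem succ_le_height_annihilator [Module.Finite R E] (hR : IsCMOfDim R d) (hrs : r + s = d)
    (h : (r : ℕ∞) ≤ (Module.annihilator R E).height)
    (hE : Subsingleton (LocalCoh (maximalIdeal R) E s)) :
    ((r + 1 : ℕ) : ℕ∞) ≤ (Module.annihilator R E).height := by
  by_cases htop : Module.annihilator R E = ⊤
  · rw [htop, Ideal.height_top]
    exact le_top
  obtain ⟨I, hIE, hI⟩ := hR.exists_isRegularSeqIdeal_le (le_maximalIdeal htop) h
  have hhom : Subsingleton (E →ₗ[R] R ⧸ I) :=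
    subsingleton_of_forall_eq 0 (hR.linearMap_quotient_eq_zero hI hrs hIE hE)
  obtain ⟨x, hx, hreg⟩ := IsSMulRegular.subsingleton_linearMap_iff.1 hhom
  exact (IsRegularSeqIdeal.succ r I x hI (le_maximalIdeal htop hx) hreg).le_height.trans
    (Ideal.height_mono (sup_le hIE ((Ideal.span_singleton_le_iff_mem _).2 hx)))

theorem subsingleton_localCoh_of_smul_eq_zero [Module.Finite R E] (hR : IsCMOfDim R d)
    (hrs : r + s = d) (h : (r : ℕ∞) ≤ (Module.annihilator R E).height)
    (hJ : ((r + 1 : ℕ) : ℕ∞) ≤ J.height)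
    (hann : ∀ a ∈ J, ∀ x : LocalCoh (maximalIdeal R) E s, a • x = 0) :
    Subsingleton (LocalCoh (maximalIdeal R) E s) := by
  obtain ⟨m, a, ha⟩ := Submodule.fg_iff_exists_fin_generating_family.1 (IsNoetherian.noetherian J)
  let Φ : (Fin m → E) →ₗ[R] E := ∑ j, a j • LinearMap.proj j
  have hquot : J ≤ Module.annihilator R (E ⧸ LinearMap.range Φ) := by
    rw [← ha, Submodule.span_le]
    rintro _ ⟨j, rfl⟩
    refine Module.mem_annihilator.2 fun x => ?_
    obtain ⟨x, rfl⟩ := Submodule.mkQ_surjective _ x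
    rw [← map_smul, Submodule.mkQ_apply, Submodule.Quotient.mk_eq_zero]
    exact ⟨Pi.single j x, by simp [Φ, Pi.single_apply]⟩
  have hker : Module.annihilator R E ≤ Module.annihilator R (LinearMap.ker Φ.rangeRestrict) :=
    fun c hc => Module.mem_annihilator.2 fun v =>
      Subtype.ext (funext fun j => Module.mem_annihilator.1 hc (v.1 j))
  have hcoh_quot : Subsingleton (LocalCoh (maximalIdeal R) (E ⧸ LinearMap.range Φ) s) :=
    hR.subsingleton_localCoh_of_le_height (hJ.trans (Ideal.height_mono hquot)) (by lia)
  have hcoh_ker : Subsingleton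
      (LocalCoh (maximalIdeal R) (LinearMap.ker Φ.rangeRestrict) (s + 1)) :=
    hR.subsingleton_localCoh_of_le_height (h.trans (Ideal.height_mono hker)) (by lia)
  refine subsingleton_of_forall_eq 0 fun x => ?_
  obtain ⟨y, rfl⟩ := LocalCoh.exists_map_eq (.of_submodule (LinearMap.range Φ)) x
    (Subsingleton.elim _ _)
  obtain ⟨z, rfl⟩ := LocalCoh.exists_map_eq_of_connecting_eq_zero
    (.of_ker Φ.surjective_rangeRestrict) y (Subsingleton.elim _ _)
  rw [LocalCoh.map_map, LinearMap.subtype_comp_codRestrict, LocalCoh.map_sum]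
  exact Finset.sum_eq_zero fun j _ => by
    rw [LocalCoh.map_smul, hann _ (ha ▸ Submodule.subset_span ⟨j, rfl⟩)]

end IsCMOfDim

end

/-! ### Local cohomology of the boundaries of a complex of projectives -/

noncomputable section

open IsLocalRing

/-- A cochain complex `Q 0 → Q 1 → ⋯` of finitely generated projective modules. -/
structure ProjCochain (R : Type u) [CommRing R] where
  Q : ℕ → Type u
  [addCommGroup : ∀ i, AddCommGroup (Q i)]
  [module : ∀ i, Module R (Q i)]
  [projective : ∀ i, Module.Projective R (Q i)]
  [finite : ∀ i, Module.Finite R (Q i)]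
  d : (i : ℕ) → Q i →ₗ[R] Q (i + 1)
  d_comp_d : ∀ i, d (i + 1) ∘ₗ d i = 0

attribute [instance] ProjCochain.addCommGroup ProjCochain.module ProjCochain.projective
  ProjCochain.finite

variable {R : Type u} [CommRing R]
variable {d i j k r s t w : ℕ}

namespace ProjCochain

/-- The image of `Q i` in `Q (i + 1)`. -/
abbrev boundary (C : ProjCochain R) (i : ℕ) : Submodule R (C.Q (i + 1)) := LinearMap.range (C.d i)

/-- The cokernel of `Q i → Q (i + 1)`. -/
abbrev coker (C : ProjCochain R) (i : ℕ) : Type u := C.Q (i + 1) ⧸ C.boundary i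

/-- The surjection from the cokernel of one differential onto the image of the next. -/
def cokerToBoundary (C : ProjCochain R) (i : ℕ) : C.coker i →ₗ[R] C.boundary (i + 1) :=
  (C.boundary i).liftQ (C.d (i + 1)).rangeRestrict <| by
    rintro _ ⟨x, rfl⟩
    exact Subtype.ext (LinearMap.congr_fun (C.d_comp_d i) x)

/-- The cohomology at `Q (i + 1)`, as a submodule of the cokernel of the incoming differential. -/
abbrev cohomology (C : ProjCochain R) (i : ℕ) : Submodule R (C.coker i) :=
  LinearMap.ker (C.cokerToBoundary i)

theorem isShortExact_cohomology (C : ProjCochain R) (i : ℕ) :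
    IsShortExact (C.cohomology i).subtype (C.cokerToBoundary i) :=
  .of_ker fun y => by
    obtain ⟨x, hx⟩ := (C.d (i + 1)).surjective_rangeRestrict y
    exact ⟨Submodule.Quotient.mk x, hx⟩

theorem isShortExact_boundary (C : ProjCochain R) (i : ℕ) :
    IsShortExact (C.boundary i).subtype (C.boundary i).mkQ :=
  .of_submodule (C.boundary i)

theorem forall_cohomology_exists_smul_eq_zero_iff (C : ProjCochain R) (i : ℕ) (S : Submonoid R) :
    (∀ x : C.cohomology i, ∃ s ∈ S, s • x = 0) ↔
      ∀ f, C.d (i + 1) f = 0 → ∃ s : S, ∃ h, C.d i h = s • f := by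
  constructor
  · intro H f hf
    obtain ⟨s, hs, hsf⟩ := H ⟨Submodule.Quotient.mk f, Subtype.ext hf⟩
    exact ⟨⟨s, hs⟩, (Submodule.Quotient.mk_eq_zero _).1 (congrArg Subtype.val hsf)⟩
  · rintro H ⟨x, hx⟩
    obtain ⟨f, rfl⟩ := Submodule.Quotient.mk_surjective _ x
    obtain ⟨s, hs⟩ := H f (congrArg Subtype.val hx)
    exact ⟨s, s.2, Subtype.ext ((Submodule.Quotient.mk_eq_zero _).2 hs)⟩

theorem annihilator_cohomology_le_iff [IsNoetherianRing R] (C : ProjCochain R) (i : ℕ)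
    (p : Ideal R) [hp : p.IsPrime] : Module.annihilator R (C.cohomology i) ≤ p ↔
      ¬ ∀ f, C.d (i + 1) f = 0 → ∃ s : p.primeCompl, ∃ h, C.d i h = s • f := by
  rw [← C.forall_cohomology_exists_smul_eq_zero_iff, ← not_iff_not, not_not,
    ← Module.mem_support_iff_of_finite (p := ⟨p, hp⟩), Module.notMem_support_iff']
  rfl

end ProjCochain

/-- The complex obtained by applying `Hom(-, R)` to a projective resolution. -/
def FiniteProjRes.dual {M : Type u} [AddCommGroup M] [Module R M] (F : FiniteProjRes R M) :
    ProjCochain R where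
  Q i := Module.Dual R (F.P i)
  d i := (F.d i).dualMap
  d_comp_d i := by
    have hzero : F.d i ∘ₗ F.d (i + 1) = 0 := LinearMap.range_le_ker_iff.1 (F.exact i).le
    ext f x
    simpa using congrArg f (LinearMap.congr_fun hzero x)

variable [IsLocalRing R] [IsNoetherianRing R]

namespace IsCMOfDim

variable {C : ProjCochain R}

theorem subsingleton_localCoh_boundary_zero (hR : IsCMOfDim R d) (hd : 0 < d) :
    Subsingleton (LocalCoh (maximalIdeal R) (C.boundary i) 0) :=
  LocalCoh.subsingleton_left_zero (C.isShortExact_boundary i)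
    (hR.subsingleton_localCoh_of_projective _ hd)

theorem subsingleton_localCoh_boundary_succ (hR : IsCMOfDim R d) (ht : t + 1 < d)
    (h : Subsingleton (LocalCoh (maximalIdeal R) (C.coker i) t)) :
    Subsingleton (LocalCoh (maximalIdeal R) (C.boundary i) (t + 1)) :=
  LocalCoh.subsingleton_left (C.isShortExact_boundary i) h
    (hR.subsingleton_localCoh_of_projective _ ht)

theorem subsingleton_localCoh_coker {i t : ℕ} (hR : IsCMOfDim R d)
    (H : ∀ i, ((i + 1 + k : ℕ) : ℕ∞) ≤ (Module.annihilator R (C.cohomology i)).height)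
    (hi : d ≤ t + k + i) (ht : t < d) : Subsingleton (LocalCoh (maximalIdeal R) (C.coker i) t) := by
  have hcohomology : Subsingleton (LocalCoh (maximalIdeal R) (C.cohomology i) t) :=
    hR.subsingleton_localCoh_of_le_height (H i) (by lia)
  refine LocalCoh.subsingleton_mid (C.isShortExact_cohomology i) hcohomology ?_
  cases t with
  | zero => exact hR.subsingleton_localCoh_boundary_zero ht
  | succ t =>
    exact hR.subsingleton_localCoh_boundary_succ ht
      (subsingleton_localCoh_coker hR H (by lia) (by lia))

theorem subsingleton_localCoh_boundary (hR : IsCMOfDim R d)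
    (H : ∀ i, ((i + 1 + k : ℕ) : ℕ∞) ≤ (Module.annihilator R (C.cohomology i)).height)
    (hi : d + 1 ≤ i + k) (hid : i < d) :
    Subsingleton (LocalCoh (maximalIdeal R) (C.boundary 0) i) := by
  cases i with
  | zero => exact hR.subsingleton_localCoh_boundary_zero hid
  | succ t =>
    exact hR.subsingleton_localCoh_boundary_succ hid
      (hR.subsingleton_localCoh_coker H (by lia) (by lia))

theorem exists_smul_localCoh_coker_eq_zero (hR : IsCMOfDim R d) (hw : w < d)
    (H : ∀ l ≥ j, (r : ℕ∞) ≤ (Module.annihilator R (C.cohomology l)).height) :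
    ∃ J : Ideal R, (r : ℕ∞) ≤ J.height ∧
      ∀ a ∈ J, ∀ x : LocalCoh (maximalIdeal R) (C.coker j) w, a • x = 0 := by
  induction w generalizing j with
  | zero =>
    refine ⟨Module.annihilator R (C.cohomology j), H j le_rfl, fun a ha x => ?_⟩
    have := hR.subsingleton_localCoh_boundary_zero (C := C) (i := j + 1) hw
    obtain ⟨y, rfl⟩ := LocalCoh.exists_map_eq (C.isShortExact_cohomology j) x
      (Subsingleton.elim _ _)
    rw [← map_smul, LocalCoh.smul_eq_zero_of_mem_annihilator ha, map_zero]
  | succ w ih =>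
    obtain ⟨J, hJ, hann⟩ := ih (j := j + 1) (by lia) fun l hl => H l (by lia)
    refine ⟨Module.annihilator R (C.cohomology j) * J, ?_, fun a ha x => ?_⟩
    · refine le_height_iff_forall_isPrime.2 fun p hp hle => ?_
      exact (hp.mul_le.1 hle).elim (le_height_iff_forall_isPrime.1 (H j le_rfl) p hp)
        (le_height_iff_forall_isPrime.1 hJ p hp)
    induction ha using Submodule.mul_induction_on' with
    | add a _ b _ ha hb => rw [add_smul, ha, hb, add_zero]
    | mem_mul_mem a ha b hb =>
      have := hR.subsingleton_localCoh_of_projective (C.Q (j + 1 + 1)) hw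
      obtain ⟨z, hz⟩ := LocalCoh.exists_connecting_eq (C.isShortExact_boundary (j + 1))
        (LocalCoh.map _ (w + 1) (C.cokerToBoundary j) x) (Subsingleton.elim _ _)
      have hbx : LocalCoh.map _ (w + 1) (C.cokerToBoundary j) (b • x) = 0 := by
        rw [map_smul, ← hz, ← map_smul, hann b hb, map_zero]
      obtain ⟨y, hy⟩ := LocalCoh.exists_map_eq (C.isShortExact_cohomology j) _ hbx
      rw [mul_smul, ← hy, ← map_smul, LocalCoh.smul_eq_zero_of_mem_annihilator ha, map_zero]

theorem subsingleton_localCoh_coker_of_boundary {i t : ℕ} (hR : IsCMOfDim R d)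
    (H : ∀ i, ((i + 1 + k : ℕ) : ℕ∞) ≤ (Module.annihilator R (C.cohomology i)).height)
    (hd : s + k + 1 = d) (h : Subsingleton (LocalCoh (maximalIdeal R) (C.boundary 0) (s + 1)))
    (hs : i + t = s) : Subsingleton (LocalCoh (maximalIdeal R) (C.coker i) t) := by
  suffices Subsingleton (LocalCoh (maximalIdeal R) (C.boundary i) (t + 1)) from
    LocalCoh.subsingleton_right (C.isShortExact_boundary i)
      (hR.subsingleton_localCoh_of_projective _ (by lia)) this
  cases i with
  | zero =>
    obtain rfl : t = s := by lia
    exact h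
  | succ i =>
    exact LocalCoh.subsingleton_right (C.isShortExact_cohomology i)
      (subsingleton_localCoh_coker_of_boundary hR H hd h (by lia))
      (hR.subsingleton_localCoh_of_le_height (H i) (by lia))

theorem subsingleton_localCoh_cohomology (hR : IsCMOfDim R d) (hd : r + t = d)
    (hi : (r : ℕ∞) ≤ (Module.annihilator R (C.cohomology i)).height)
    (H : ∀ l > i, ((r + 1 : ℕ) : ℕ∞) ≤ (Module.annihilator R (C.cohomology l)).height)
    (h : Subsingleton (LocalCoh (maximalIdeal R) (C.coker i) t)) :
    Subsingleton (LocalCoh (maximalIdeal R) (C.cohomology i) t) := by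
  have hs := C.isShortExact_cohomology i
  rcases t with _ | _ | w
  · exact LocalCoh.subsingleton_left_zero hs h
  · exact LocalCoh.subsingleton_left hs (hR.subsingleton_localCoh_boundary_zero (by lia)) h
  · obtain ⟨J, hJ, hann⟩ :=
      hR.exists_smul_localCoh_coker_eq_zero (w := w) (j := i + 1) (by lia) H
    refine hR.subsingleton_localCoh_of_smul_eq_zero hd hi hJ fun a ha x => ?_
    obtain ⟨y, rfl⟩ := LocalCoh.exists_connecting_eq hs x (Subsingleton.elim _ _)
    have := hR.subsingleton_localCoh_of_projective (C.Q (i + 1 + 1)) (i := w + 1) (by lia)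
    obtain ⟨z, rfl⟩ := LocalCoh.exists_connecting_eq (C.isShortExact_boundary (i + 1)) y
      (Subsingleton.elim _ _)
    rw [← map_smul, ← map_smul, hann a ha, map_zero, map_zero]

theorem succ_le_height_annihilator_cohomology (hR : IsCMOfDim R d)
    (H : ∀ i, ((i + 1 + k : ℕ) : ℕ∞) ≤ (Module.annihilator R (C.cohomology i)).height)
    (hd : s + k + 1 = d)
    (h : Subsingleton (LocalCoh (maximalIdeal R) (C.boundary 0) (s + 1))) (i : ℕ) :
    ((i + 1 + (k + 1) : ℕ) : ℕ∞) ≤ (Module.annihilator R (C.cohomology i)).height := by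
  rcases lt_or_ge s i with hlt | hle
  · exact hR.le_height_of_lt (H i) (by lia) _
  · obtain ⟨t, rfl⟩ := Nat.exists_eq_add_of_le hle
    refine hR.succ_le_height_annihilator (r := i + 1 + k) (s := t) (by lia) (H i) ?_
    refine hR.subsingleton_localCoh_cohomology (by lia) (H i) (fun l hl => ?_)
      (hR.subsingleton_localCoh_coker_of_boundary H hd h rfl)
    exact le_trans (by exact_mod_cast (by lia : i + 1 + k + 1 ≤ l + 1 + k)) (H l)

end IsCMOfDim

end

/-! ### Serre's condition and local cohomology -/

noncomputable section

open IsLocalRing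

variable {R : Type u} [CommRing R]
variable {M : Type u} [AddCommGroup M] [Module R M]
variable {d m n : ℕ}

/-- A minimal resolution, with its minimality forgotten. -/
def FiniteProjRes.ofMinRes (F : MinRes R M) : FiniteProjRes R M where
  P i := F.P i
  projective := F.projective
  finite := F.finite
  d := F.d
  ε := F.ε
  surj := F.surj
  exact_zero := F.exact0
  exact := F.exact

theorem exists_injective_pi_of_isKthSyzygy_one (h : IsKthSyzygy R 1 (ModuleCat.of R M)) :
    ∃ (m : ℕ) (f : M →ₗ[R] (Fin m → R)), Function.Injective f := by
  obtain ⟨P, f, _, _, hf, -⟩ := h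
  obtain ⟨m, -, g, -, hg, -⟩ := Module.Finite.exists_comp_eq_id_of_projective R P
  exact ⟨m, g ∘ₗ f, hg.comp hf⟩

theorem isKthSyzygy_one_of_isHorizontallyLinked (h : IsHorizontallyLinked R M) :
    IsKthSyzygy R 1 (ModuleCat.of R M) := by
  obtain ⟨_, G, ⟨φ⟩⟩ := h
  have := G.projective 1
  have := G.finite 1
  exact ⟨ModuleCat.of R (Module.Dual R (G.P 1)),
    (LinearMap.range (G.d 0).dualMap).subtype ∘ₗ φ.symm.toLinearMap,
    inferInstanceAs (Module.Projective R (Module.Dual R (G.P 1))),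
    inferInstanceAs (Module.Finite R (Module.Dual R (G.P 1))),
    Subtype.val_injective.comp φ.symm.injective, trivial⟩

theorem exists_gdimLE_of_gdim_lt_top (h : GDim R M < ⊤) :
    ∃ n, GDimLE R n (ModuleCat.of R M) := by
  obtain ⟨_, ⟨n, -, hn⟩, -⟩ := sInf_lt_iff.1 h
  exact ⟨n, hn⟩

theorem serreS_zero : SerreS R 0 M := fun _ _ =>
  (min_le_left _ _).trans (WithBot.coe_le_coe.2 zero_le)

variable [IsLocalRing R]

theorem isCMOfDim_of_rdepth_eq (hdim : ringKrullDim R = ((d : ℕ∞) : WithBot ℕ∞))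
    (hCM : rdepth R = (d : ℕ∞)) : IsCMOfDim R d where
  ext := le_edepth_iff.1 hCM.ge
  dim := WithBot.coe_injective (maximalIdeal_height_eq_ringKrullDim.trans hdim)

namespace IsCMOfDim

variable [IsNoetherianRing R] {f : M →ₗ[R] (Fin m → R)}

theorem serreS_iff_le_height (hR : IsCMOfDim R d) (hf : Function.Injective f)
    (F : FiniteProjRes R M) (hn : IsTotallyReflexive R (LinearMap.range (F.d n))) (k : ℕ) :
    SerreS R k M ↔
      ∀ i, ((i + 1 + k : ℕ) : ℕ∞) ≤ (Module.annihilator R (F.dual.cohomology i)).height := by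
  simp_rw [hR.serreS_iff hf F hn, FiniteProjRes.localize_homExactAt_iff]
  have le_iff (i : ℕ) (p : Ideal R) [p.IsPrime] := F.dual.annihilator_cohomology_le_iff i p
  exact ⟨fun H i => le_height_iff_forall_isPrime.2 fun p hp hle => H p hp i ((le_iff i p).1 hle),
    fun H p hp i hi => (H i).trans (Ideal.height_mono ((le_iff i p).2 hi))⟩

theorem serreS_iff_subsingleton_localCoh (hR : IsCMOfDim R d) (hf : Function.Injective f)
    (F : FiniteProjRes R M) (hn : IsTotallyReflexive R (LinearMap.range (F.d n))) (k : ℕ) :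
    SerreS R k M ↔ ∀ i, d + 1 ≤ i + k → i < d →
      Subsingleton (LocalCoh (maximalIdeal R) (F.dual.boundary 0) i) := by
  refine ⟨fun h i => hR.subsingleton_localCoh_boundary
    ((hR.serreS_iff_le_height hf F hn k).1 h), fun H => ?_⟩
  induction k with
  | zero => exact serreS_zero
  | succ k ih =>
    rcases k.eq_zero_or_pos with rfl | hk
    · exact hR.serreS_one hf
    have height_ge := (hR.serreS_iff_le_height hf F hn k).1 (ih fun i hi => H i (by lia))
    refine (hR.serreS_iff_le_height hf F hn (k + 1)).2 fun i => ?_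
    rcases lt_or_ge k d with k_lt | d_le
    · obtain ⟨s, rfl⟩ := Nat.exists_eq_add_of_lt k_lt
      exact hR.succ_le_height_annihilator_cohomology height_ge (by lia)
        (H (s + 1) (by lia) (by lia)) i
    · exact hR.le_height_of_lt (height_ge i) (by lia) _

end IsCMOfDim

end

end HorizontalLinkage

section Statements

variable (R : Type u) [CommRing R] [IsNoetherianRing R]

open HorizontalLinkage in
theorem stmt15_general [IsLocalRing R] (d : ℕ)
    (hdim : ringKrullDim R = ((d : ℕ∞) : WithBot ℕ∞)) (hCM : rdepth R = (d : ℕ∞))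
    (M : Type u) [AddCommGroup M] [Module R M] (F : FiniteProjRes R M)
    (hM : IsKthSyzygy R 1 (ModuleCat.of R M)) (hfin : GDim R M < ⊤) (k : ℕ) :
    SerreS R k M ↔ ∀ i : ℕ, (d : ℤ) - k + 1 ≤ (i : ℤ) → (i : ℤ) ≤ (d : ℤ) - 1 →
      Subsingleton (locCoh R (IsLocalRing.maximalIdeal R) i
        (LinearMap.range (F.d 0).dualMap)) := by
  have hR : IsCMOfDim R d := isCMOfDim_of_rdepth_eq hdim hCM
  obtain ⟨m, f, hf⟩ := exists_injective_pi_of_isKthSyzygy_one hM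
  obtain ⟨n, hn⟩ := exists_gdimLE_of_gdim_lt_top hfin
  rw [hR.serreS_iff_subsingleton_localCoh hf F (F.isTotallyReflexive_range_of_gdimLE hn) k]
  refine forall_congr' fun i => ?_
  rw [subsingleton_locCoh_iff]
  exact ⟨fun h h₁ h₂ => h (by lia) (by lia), fun h h₁ h₂ => h (by lia) (by lia)⟩

theorem stmt15 [IsLocalRing R] (d : ℕ) (hdim : ringKrullDim R = ((d : ℕ∞) : WithBot ℕ∞))
    (hCM : rdepth R = (d : ℕ∞))
    (M : Type u) [AddCommGroup M] [Module R M] [Module.Finite R M]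
    (F : MinRes R M) (hHL : IsHorizontallyLinked R M) (hfin : GDim R M < ⊤) (k : ℕ) :
    SerreS R k M ↔ ∀ i : ℕ, (d : ℤ) - k + 1 ≤ (i : ℤ) → (i : ℤ) ≤ (d : ℤ) - 1 →
      Subsingleton (locCoh R (IsLocalRing.maximalIdeal R) i F.lambdaMod) :=
  stmt15_general R d hdim hCM M (HorizontalLinkage.FiniteProjRes.ofMinRes F)
    (HorizontalLinkage.isKthSyzygy_one_of_isHorizontallyLinked hHL) hfin k

end Statements
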